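/- arXiv:1201.0484 — 5 statements merged into one kernel-verified Lean document; each statement's English description precedes it below -/
import Mathlib

section
/- Let q = p^h with p an odd prime. Let A be a set of exactly q affine points of PG(2,q) and let D ⊆ L∞ be the set of directions determined by A. If |D| < (q+3)/2, then A together with the complement of D in L∞, i.e. the set A ∪ (L∞ \ D), is a set without tangents in PG(2,q). -/
/-!
`PG(2,F)`: points are the 1-dimensional subspaces of `F^3` (modelled as the
projectivization of `Fin 3 → F`), lines are the 2-dimensional subspaces.
-/

variable {F : Type*} [Field F]

/-- The points of `PG(2,F)`: 1-dimensional subspaces of `F^3`. -/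
abbrev PGPoint (F : Type*) [Field F] := Projectivization F (Fin 3 → F)

/-- A line of `PG(2,F)` is a 2-dimensional subspace of `F^3`. -/
def IsProjLine (F : Type*) [Field F] (L : Submodule F (Fin 3 → F)) : Prop :=
  Module.finrank F L = 2

/-- The set of projective points lying on the subspace `L`. -/
def pointsOn (L : Submodule F (Fin 3 → F)) : Set (PGPoint F) :=
  {P | P.submodule ≤ L}

/-- `S` is a set without tangents: no line of `PG(2,F)` meets `S` in exactly one point. -/
def NoTangents (S : Set (PGPoint F)) : Prop :=
  ∀ L : Submodule F (Fin 3 → F), IsProjLine F L →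
    ¬ (∃! P : PGPoint F, P ∈ S ∩ pointsOn L)

/-- The line at infinity `Z = 0` of `PG(2,F)`. -/
def Linf (F : Type*) [Field F] : Submodule F (Fin 3 → F) :=
  LinearMap.ker (LinearMap.proj 2 : (Fin 3 → F) →ₗ[F] F)

/-- The set of directions (points of the line at infinity) determined by a set `A`
of affine points: for distinct `⟨(x₁,y₁,1)⟩`, `⟨(x₂,y₂,1)⟩` in `A` the determined
direction is `⟨(x₁-x₂, y₁-y₂, 0)⟩` (which is `⟨(1,(y₁-y₂)/(x₁-x₂),0)⟩` if `x₁ ≠ x₂`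
and `⟨(0,1,0)⟩` if `x₁ = x₂`). -/
def dirs (A : Set (PGPoint F)) : Set (PGPoint F) :=
  {d | ∃ P1 ∈ A, ∃ P2 ∈ A, P1 ≠ P2 ∧ ∃ x1 y1 x2 y2 : F,
    P1.submodule = Submodule.span F {![x1, y1, 1]} ∧
    P2.submodule = Submodule.span F {![x2, y2, 1]} ∧
    d.submodule = Submodule.span F {![x1 - x2, y1 - y2, 0]}}

open Polynomial in
lemma prod_univ_X_sub_C_eq [Fintype F] :
    ∏ x : F, (X - C x) = (X ^ Fintype.card F - X : F[X]) := by
  have hdeg := FiniteField.X_pow_card_sub_X_natDegree_eq F (Fintype.one_lt_card (α := F))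
  have hmonic : (X ^ Fintype.card F - X : F[X]).Monic :=
    monic_X_pow_sub (by simpa using Fintype.one_lt_card (α := F))
  have := prod_multiset_X_sub_C_of_monic_of_roots_card_eq hmonic
    (by rw [FiniteField.roots_X_pow_card_sub_X, hdeg]; rfl)
  rwa [FiniteField.roots_X_pow_card_sub_X] at this

open Polynomial in
/-- A fully reducible polynomial `X ^ q + g` over `F_q` with `2 * deg g ≤ q` and at least one
simple root has only simple roots. -/
lemma injOn_of_lacunary_of_simple_root {ι : Type*} [DecidableEq ι] [Fintype F]
    (s : Finset ι) (b : ι → F) (g : F[X])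
    (hfg : ∏ i ∈ s, (X - C (b i)) = X ^ Fintype.card F + g)
    (hg : 2 * g.natDegree ≤ Fintype.card F) {i₀ : ι} (hi₀ : i₀ ∈ s)
    (hsimple : ∀ j ∈ s, b j = b i₀ → j = i₀) : Set.InjOn b s := by
  classical
  have hq : 1 < Fintype.card F := Fintype.one_lt_card
  set f : F[X] := ∏ i ∈ s, (X - C (b i)) with hf
  have hder : derivative f = derivative g := by
    rw [hfg, derivative_add, derivative_X_pow, FiniteField.cast_card_eq_zero]
    simp
  have hfibre : f = ∏ x ∈ s.image b, (X - C x) ^ (s.filter (b · = x)).card :=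
    Finset.prod_comp (fun x => X - C x) b
  have hdvd : f ∣ (X + g) * derivative g := by
    rw [hfibre]
    refine Finset.prod_dvd_of_coprime (fun x _ y _ hxy => ?_) (fun x hx => ?_)
    · exact (pairwise_coprime_X_sub_C Function.injective_id hxy).pow
    · obtain ⟨i, hi, rfl⟩ := Finset.mem_image.1 hx
      have hpow : (X - C (b i)) ^ (s.filter (b · = b i)).card ∣ f := by
        rw [hfibre]; exact Finset.dvd_prod_of_mem _ hx
      have hpos : 0 < (s.filter (b · = b i)).card :=
        Finset.card_pos.2 ⟨i, by simp [hi]⟩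
      have hroot : X - C (b i) ∣ X + g := by
        rw [dvd_iff_isRoot, IsRoot.def]
        have h0 : f.eval (b i) = 0 := by
          rw [hf, eval_prod]; exact Finset.prod_eq_zero hi (by simp)
        rw [hfg] at h0
        simpa [FiniteField.pow_card] using h0
      have hpow' := pow_sub_one_dvd_derivative_of_pow_dvd hpow
      rw [hder] at hpow'
      obtain ⟨m, hm⟩ := Nat.exists_eq_succ_of_ne_zero hpos.ne'
      rw [hm] at hpow' ⊢
      rw [pow_succ']
      exact mul_dvd_mul hroot hpow'
  have hder_ne : derivative f ≠ 0 := by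
    intro h0
    have h1 : f = (X - C (b i₀)) * ∏ i ∈ s.erase i₀, (X - C (b i)) :=
      (Finset.mul_prod_erase s _ hi₀).symm
    have h2 : (derivative f).eval (b i₀) = 0 := by rw [h0]; simp
    rw [h1] at h2
    simp only [derivative_mul, derivative_sub, derivative_X, derivative_C, sub_zero, one_mul,
      eval_add, eval_mul, eval_sub, eval_X, eval_C, sub_self, zero_mul, add_zero, eval_prod] at h2
    obtain ⟨j, hj, hj0⟩ := Finset.prod_eq_zero_iff.1 h2
    rw [Finset.mem_erase] at hj
    exact hj.1 (hsimple j hj.2 (sub_eq_zero.1 hj0).symm)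
  have hg0 : g.natDegree ≠ 0 := by
    intro h0
    rw [hder, eq_C_of_natDegree_eq_zero h0] at hder_ne
    simp at hder_ne
  have hdegf : f.natDegree = Fintype.card F := by
    rw [hfg, natDegree_add_eq_left_of_natDegree_lt, natDegree_X_pow]
    rw [natDegree_X_pow]; omega
  have hzero : (X + g) * derivative g = 0 := by
    by_contra hne
    have h1 := natDegree_le_of_dvd hdvd hne
    have h2 : ((X + g) * derivative g).natDegree ≤ (X + g).natDegree + (derivative g).natDegree :=
      natDegree_mul_le
    have h3 : (X + g).natDegree ≤ max (X : F[X]).natDegree g.natDegree := natDegree_add_le _ _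
    have h4 := natDegree_derivative_le g
    rw [natDegree_X] at h3
    rw [hdegf] at h1
    omega
  have hgX : X + g = 0 := (mul_eq_zero.1 hzero).resolve_right (hder ▸ hder_ne)
  have hderg : derivative f = -1 := by
    rw [hder, ← neg_eq_of_add_eq_zero_right hgX]; simp
  intro i hi j hj hij
  by_contra hne
  have hdvd2 : (X - C (b i)) ^ 2 ∣ f := by
    rw [hf, ← Finset.mul_prod_erase s _ hi,
      ← Finset.mul_prod_erase (s.erase i) _ (Finset.mem_erase.2 ⟨fun h => hne h.symm, hj⟩),
      ← mul_assoc, hij, ← sq]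
    exact dvd_mul_right _ _
  have h3 := pow_sub_one_dvd_derivative_of_pow_dvd hdvd2
  rw [hderg, dvd_neg] at h3
  exact not_isUnit_X_sub_C (b i) (isUnit_of_dvd_one (by simpa using h3))

open Polynomial in
lemma natDegree_coeff_prod_X_sub_C_le {ι : Type*} (s : Finset ι) (l : ι → F[X])
    (hl : ∀ i ∈ s, (l i).natDegree ≤ 1) (k : ℕ) :
    ((∏ i ∈ s, (X - C (l i)) : F[X][X]).coeff k).natDegree ≤ s.card - k := by
  classical
  induction s using Finset.induction_on generalizing k with
  | empty =>
    rw [Finset.prod_empty, coeff_one]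
    split <;> simp
  | insert i s hi ih =>
    have ih' := ih fun j hj => hl j (Finset.mem_insert_of_mem hj)
    have hli := hl i (Finset.mem_insert_self i s)
    rw [Finset.prod_insert hi, Finset.card_insert_of_notMem hi, sub_mul, coeff_sub, coeff_C_mul]
    refine (natDegree_sub_le _ _).trans (max_le ?_ ?_)
    · cases k with
      | zero => simp
      | succ k => rw [coeff_X_mul]; exact (ih' k).trans (by omega)
    · by_cases hk : k ≤ s.card
      · exact natDegree_mul_le.trans ((add_le_add hli (ih' k)).trans (by omega))
      · rw [coeff_eq_zero_of_natDegree_lt, mul_zero, natDegree_zero]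
        · exact Nat.zero_le _
        · rw [natDegree_prod_of_monic _ _ fun j _ => monic_X_sub_C _]
          simpa using hk

open Polynomial in
/-- If `q` points `(a i, b i)` of `F_q × F_q` are such that `b + t * a` fails to be injective for
at most `q / 2` values of `t`, among them `t = 0`, then every nonempty fibre of `b` has at least
two elements. -/
lemma exists_ne_of_not_injOn {ι : Type*} [DecidableEq ι] [Fintype F] (s : Finset ι) (a b : ι → F)
    (hs : s.card = Fintype.card F) (T : Finset F)
    (hT : ∀ t ∉ T, Set.InjOn (fun i => b i + t * a i) s)
    (hTcard : 2 * T.card ≤ Fintype.card F) (hb : ¬ Set.InjOn b s) {i₀ : ι} (hi₀ : i₀ ∈ s) :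
    ∃ j ∈ s, b j = b i₀ ∧ j ≠ i₀ := by
  classical
  by_contra! hsimple
  have hq : 1 < Fintype.card F := Fintype.one_lt_card
  have hT0 : 0 < T.card := by
    refine Finset.card_pos.2 ⟨0, ?_⟩
    by_contra h0
    exact hb (by simpa using hT 0 h0)
  set R : F[X][X] := ∏ i ∈ s, (X - C (C (b i) + X * C (a i))) with hR
  have hmap : ∀ t : F, R.map (evalRingHom t) = ∏ i ∈ s, (X - C (b i + t * a i)) := by
    intro t
    rw [hR, Polynomial.map_prod]
    refine Finset.prod_congr rfl fun i _ => ?_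
    simp [mul_comm (C t)]
  have hcoeff : ∀ k, T.card < k → k < Fintype.card F → R.coeff k = 0 := by
    intro k hk hkq
    refine eq_zero_of_natDegree_lt_card_of_eval_eq_zero' _ Tᶜ (fun t ht => ?_) ?_
    · have hinj := hT t (Finset.mem_compl.1 ht)
      have himage : s.image (fun i => b i + t * a i) = Finset.univ := by
        rw [← Finset.card_eq_iff_eq_univ, Finset.card_image_of_injOn hinj, hs]
      have hprod : R.map (evalRingHom t) = X ^ Fintype.card F - X := by
        rw [hmap, ← prod_univ_X_sub_C_eq, ← himage, Finset.prod_image hinj]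
      have := congrArg (fun f => f.coeff k) hprod
      have hk1 : 1 ≠ k := by omega
      simpa [coeff_map, coeff_X_pow, coeff_X, hkq.ne, if_neg hk1] using this
    · rw [Finset.card_compl]
      have := natDegree_coeff_prod_X_sub_C_le s (fun i => C (b i) + X * C (a i))
        (fun i _ => by compute_degree) k
      rw [hs] at this
      exact this.trans_lt (by omega)
  set f : F[X] := ∏ i ∈ s, (X - C (b i)) with hf
  have hRf : R.map (evalRingHom 0) = f := by rw [hmap, hf]; simp
  have hfmonic : f.Monic := monic_prod_of_monic _ _ fun i _ => monic_X_sub_C _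
  have hfdeg : f.natDegree = Fintype.card F := by
    rw [hf, natDegree_prod_of_monic _ _ fun i _ => monic_X_sub_C _]; simp [hs]
  have hgdeg : (f - X ^ Fintype.card F).natDegree ≤ T.card := by
    rw [natDegree_le_iff_coeff_eq_zero]
    intro k hk
    rw [coeff_sub, coeff_X_pow]
    rcases lt_trichotomy k (Fintype.card F) with hlt | rfl | hgt
    · rw [if_neg hlt.ne, ← hRf, coeff_map, hcoeff k hk hlt]; simp
    · rw [if_pos rfl, ← hfdeg, hfmonic.coeff_natDegree, sub_self]
    · rw [if_neg hgt.ne', coeff_eq_zero_of_natDegree_lt (hfdeg ▸ hgt), sub_zero]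
  exact hb (injOn_of_lacunary_of_simple_root s b (f - X ^ Fintype.card F) (by ring)
    (by omega) hi₀ hsimple)

lemma vecCons_pair_zero_ne_zero {a b : F} (h : a ≠ 0 ∨ b ≠ 0) : (![a, b, 0] : Fin 3 → F) ≠ 0 := by
  intro h0
  have h1 := congrFun h0 0
  have h2 := congrFun h0 1
  simp at h1 h2
  tauto

/-- The point at infinity `⟨(a, b, 0)⟩`. -/
def dirPoint (a b : F) (h : a ≠ 0 ∨ b ≠ 0) : PGPoint F :=
  Projectivization.mk F ![a, b, 0] (vecCons_pair_zero_ne_zero h)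

lemma dirPoint_submodule (a b : F) (h : a ≠ 0 ∨ b ≠ 0) :
    (dirPoint a b h).submodule = Submodule.span F {![a, b, 0]} :=
  Projectivization.submodule_mk _ _

lemma dirPoint_eq_iff {a b c d : F} (h : a ≠ 0 ∨ b ≠ 0) (h' : c ≠ 0 ∨ d ≠ 0) :
    dirPoint a b h = dirPoint c d h' ↔ a * d = b * c := by
  rw [dirPoint, dirPoint, Projectivization.mk_eq_mk_iff']
  constructor
  · rintro ⟨k, hk⟩
    have h1 : k * c = a := by simpa using congrFun hk 0
    have h2 : k * d = b := by simpa using congrFun hk 1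
    rw [← h1, ← h2]; ring
  · intro hab
    rcases eq_or_ne c 0 with rfl | hc
    · have hd : d ≠ 0 := by simpa using h'
      have ha : a = 0 := by simpa [hd] using hab
      refine ⟨b / d, ?_⟩
      ext i
      fin_cases i <;> simp [ha, hd]
    · refine ⟨a / c, ?_⟩
      ext i
      fin_cases i
      · simp [hc]
      · simp only [Fin.mk_one, Pi.smul_apply, smul_eq_mul, Matrix.cons_val_one, Matrix.cons_val_zero]
        field_simp
        linear_combination hab
      · simp

lemma eq_of_span_affine_eq {x y x' y' : F}
    (h : Submodule.span F {(![x, y, 1] : Fin 3 → F)} = Submodule.span F {![x', y', 1]}) :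
    x = x' ∧ y = y' := by
  have hmem : (![x, y, 1] : Fin 3 → F) ∈ Submodule.span F {(![x', y', 1] : Fin 3 → F)} :=
    h ▸ Submodule.mem_span_singleton_self _
  obtain ⟨k, hk⟩ := Submodule.mem_span_singleton.1 hmem
  have h0 : k * x' = x := by simpa using congrFun hk 0
  have h1 : k * y' = y := by simpa using congrFun hk 1
  have h2 : k = 1 := by simpa using congrFun hk 2
  subst h2
  simpa [eq_comm] using And.intro h0 h1

lemma exists_dirPoint_eq {P : PGPoint F} (hP : P ∈ pointsOn (Linf F)) :
    ∃ a b, ∃ h : a ≠ 0 ∨ b ≠ 0, P = dirPoint a b h := by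
  induction P using Projectivization.ind with
  | h v hv =>
    have hv2 : v 2 = 0 := by
      simpa [pointsOn, Linf, Projectivization.submodule_mk] using hP
    have hvec : v = ![v 0, v 1, 0] := by
      ext i; fin_cases i <;> simp [hv2]
    have hne : v 0 ≠ 0 ∨ v 1 ≠ 0 := by
      by_contra! h0
      exact hv (by rw [hvec, h0.1, h0.2]; ext i; fin_cases i <;> rfl)
    refine ⟨v 0, v 1, hne, ?_⟩
    simp only [dirPoint, ← hvec]

lemma dirPoint_mem_pointsOn_Linf (a b : F) (h : a ≠ 0 ∨ b ≠ 0) :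
    dirPoint a b h ∈ pointsOn (Linf F) := by
  simp [pointsOn, Linf, dirPoint_submodule]

lemma exists_submodule_eq_span_affine {P : PGPoint F} (hP : P ∉ pointsOn (Linf F)) :
    ∃ x y : F, P.submodule = Submodule.span F {![x, y, 1]} := by
  induction P using Projectivization.ind with
  | h v hv =>
    have hv2 : v 2 ≠ 0 := by
      simpa [pointsOn, Linf, Projectivization.submodule_mk] using hP
    refine ⟨v 0 / v 2, v 1 / v 2, ?_⟩
    have hvec : (![v 0 / v 2, v 1 / v 2, 1] : Fin 3 → F) = (v 2)⁻¹ • v := by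
      ext i; fin_cases i <;> simp [hv2, div_eq_inv_mul]
    rw [hvec, Projectivization.submodule_mk,
      Submodule.span_singleton_smul_eq (IsUnit.mk0 _ (inv_ne_zero hv2))]

/-- A direction is determined by `A` iff two points of `A` are on a common line in this
direction. -/
lemma dirPoint_mem_dirs_iff {A : Set (PGPoint F)} {x y : PGPoint F → F}
    (hxy : ∀ P ∈ A, P.submodule = Submodule.span F {![x P, y P, 1]})
    (a b : F) (h : a ≠ 0 ∨ b ≠ 0) :
    dirPoint a b h ∈ dirs A ↔ ¬ Set.InjOn (fun P => b * x P - a * y P) A := by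
  constructor
  · rintro ⟨P, hP, Q, hQ, hPQ, x1, y1, x2, y2, h1, h2, h3⟩ hinj
    obtain ⟨rfl, rfl⟩ := eq_of_span_affine_eq ((hxy P hP).symm.trans h1)
    obtain ⟨rfl, rfl⟩ := eq_of_span_affine_eq ((hxy Q hQ).symm.trans h2)
    rw [dirPoint_submodule] at h3
    have hmem : (![x P - x Q, y P - y Q, 0] : Fin 3 → F) ∈
        Submodule.span F {(![a, b, 0] : Fin 3 → F)} :=
      h3 ▸ Submodule.mem_span_singleton_self _
    obtain ⟨k, hk⟩ := Submodule.mem_span_singleton.1 hmem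
    have e0 : k * a = x P - x Q := by simpa using congrFun hk 0
    have e1 : k * b = y P - y Q := by simpa using congrFun hk 1
    refine hPQ (hinj hP hQ ?_)
    linear_combination a * e1 - b * e0
  · intro hinj
    simp only [Set.InjOn, not_forall] at hinj
    obtain ⟨P, hP, Q, hQ, hab, hPQ⟩ := hinj
    have hne : x P - x Q ≠ 0 ∨ y P - y Q ≠ 0 := by
      by_contra! h0
      refine hPQ (Projectivization.submodule_injective ?_)
      rw [hxy P hP, hxy Q hQ, sub_eq_zero.1 h0.1, sub_eq_zero.1 h0.2]
    refine ⟨P, hP, Q, hQ, hPQ, x P, y P, x Q, y Q, hxy P hP, hxy Q hQ, ?_⟩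
    rw [← dirPoint_submodule _ _ hne, (dirPoint_eq_iff h hne).2]
    linear_combination -hab

lemma exists_equation_of_isProjLine {L : Submodule F (Fin 3 → F)} (hL : IsProjLine F L)
    (hLinf : L ≠ Linf F) :
    ∃ a b c : F, (a ≠ 0 ∨ b ≠ 0) ∧ ∀ v, v ∈ L ↔ b * v 0 - a * v 1 = c * v 2 := by
  have hker : ∀ f : (Fin 3 → F) →ₗ[F] F, f ≠ 0 → Module.finrank F (LinearMap.ker f) = 2 := by
    intro f hf
    have h1 := f.finrank_range_add_finrank_ker
    rw [LinearMap.range_eq_top.2 (LinearMap.surjective hf), finrank_top] at h1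
    simp at h1
    omega
  have hlt : L < ⊤ := by
    refine lt_top_iff_ne_top.2 fun h => ?_
    have h2 : Module.finrank F L = 2 := hL
    rw [h, finrank_top] at h2
    simp at h2
  obtain ⟨f, hf, hle⟩ := Submodule.exists_le_ker_of_lt_top L hlt
  have hLf : L = LinearMap.ker f :=
    Submodule.eq_of_le_of_finrank_eq hle (by rw [hker f hf]; exact hL)
  have hfv : ∀ v, f v = v 0 * f (Pi.single 0 1) + v 1 * f (Pi.single 1 1)
      + v 2 * f (Pi.single 2 1) := by
    intro v
    have hv : v = v 0 • Pi.single 0 1 + v 1 • Pi.single 1 1 + v 2 • Pi.single 2 1 := by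
      ext i; fin_cases i <;> simp
    conv_lhs => rw [hv]
    simp only [map_add, map_smul, smul_eq_mul]
  refine ⟨-f (Pi.single 1 1), f (Pi.single 0 1), -f (Pi.single 2 1), ?_, fun v => ?_⟩
  · by_contra! h0
    have h1 : f (Pi.single 1 1) = 0 := neg_eq_zero.1 h0.1
    have hle' : Linf F ≤ LinearMap.ker f := by
      intro v hv
      have hv2 : v 2 = 0 := by simpa [Linf] using hv
      rw [LinearMap.mem_ker, hfv, h0.2, h1, hv2]; ring
    refine hLinf (hLf.trans (Submodule.eq_of_le_of_finrank_eq hle' ?_).symm)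
    rw [hker f hf]
    refine hker _ fun h => ?_
    simpa using LinearMap.congr_fun h (Pi.single 2 1)
  · rw [hLf, LinearMap.mem_ker, hfv]
    constructor <;> intro h <;> linear_combination h

lemma card_add_one_le_ncard_pointsOn_Linf [Fintype F] :
    Fintype.card F + 1 ≤ (pointsOn (Linf F)).ncard := by
  classical
  let φ : Option F → PGPoint F := fun o =>
    o.elim (dirPoint 0 1 (Or.inr one_ne_zero)) fun m => dirPoint 1 m (Or.inl one_ne_zero)
  have hinj : Set.InjOn φ Set.univ := by
    rintro (_ | m) - (_ | n) - h
    · rfl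
    · simp [φ, dirPoint_eq_iff] at h
    · simp [φ, dirPoint_eq_iff] at h
    · simpa [φ, dirPoint_eq_iff, eq_comm] using h
  have hmem : ∀ o ∈ Set.univ, φ o ∈ pointsOn (Linf F) := by
    rintro (_ | m) -
    · exact dirPoint_mem_pointsOn_Linf 0 1 (Or.inr one_ne_zero)
    · exact dirPoint_mem_pointsOn_Linf 1 m (Or.inl one_ne_zero)
  have := Set.ncard_le_ncard_of_injOn φ hmem hinj (Set.toFinite _)
  simpa [Set.ncard_univ, Fintype.card_option] using this

/-- For every direction there is a second one such that at most `q / 2` of the determined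
directions differ from it. -/
lemma exists_direction_ne [Fintype F] {D : Set (PGPoint F)} (hDinf : D ⊆ pointsOn (Linf F))
    (hD : 2 * D.ncard < Fintype.card F + 3) (a b : F) (h : a ≠ 0 ∨ b ≠ 0) :
    ∃ c d, ∃ h' : c ≠ 0 ∨ d ≠ 0, a * d ≠ b * c ∧
      2 * (D \ {dirPoint c d h'}).ncard ≤ Fintype.card F := by
  have hq : 1 < Fintype.card F := Fintype.one_lt_card
  by_cases hE : ∃ e ∈ D, e ≠ dirPoint a b h
  · obtain ⟨e, he, hne⟩ := hE
    obtain ⟨c, d, h', rfl⟩ := exists_dirPoint_eq (hDinf he)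
    refine ⟨c, d, h', fun heq => hne ((dirPoint_eq_iff h h').2 heq).symm, ?_⟩
    have := Set.ncard_sdiff_singleton_add_one he (Set.toFinite _)
    omega
  · push Not at hE
    have hcard : ∀ e : PGPoint F, 2 * (D \ {e}).ncard ≤ Fintype.card F := by
      intro e
      have h1 : (D \ {e}).ncard ≤ ({dirPoint a b h} : Set (PGPoint F)).ncard :=
        Set.ncard_le_ncard (fun P hP => hE P hP.1) (Set.toFinite _)
      rw [Set.ncard_singleton] at h1
      omega
    rcases h with ha | hb
    · exact ⟨0, 1, Or.inr one_ne_zero, by simpa using ha, hcard _⟩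
    · exact ⟨1, 0, Or.inl one_ne_zero, by simpa using hb.symm, hcard _⟩

/-- A line in a direction determined by `A` does not meet `A` in exactly one point. -/
lemma exists_ne_mem_of_dirPoint_mem_dirs [Fintype F] {A : Set (PGPoint F)} {x y : PGPoint F → F}
    (hxy : ∀ P ∈ A, P.submodule = Submodule.span F {![x P, y P, 1]})
    (hA : A.ncard = Fintype.card F) (hDinf : dirs A ⊆ pointsOn (Linf F))
    (hD : 2 * (dirs A).ncard < Fintype.card F + 3) {a b : F} (h : a ≠ 0 ∨ b ≠ 0)
    (hab : dirPoint a b h ∈ dirs A) {P : PGPoint F} (hP : P ∈ A) :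
    ∃ Q ∈ A, b * x Q - a * y Q = b * x P - a * y P ∧ Q ≠ P := by
  classical
  obtain ⟨c, d, h', hne, hcard⟩ := exists_direction_ne hDinf hD a b h
  let s := A.toFinite.toFinset
  have hs : (s : Set (PGPoint F)) = A := Set.Finite.coe_toFinset _
  have hdir : ∀ t : F, a + t * c ≠ 0 ∨ b + t * d ≠ 0 := by
    intro t
    by_contra! h0
    exact hne (by linear_combination d * h0.1 - c * h0.2)
  let T : Finset F := Finset.univ.filter fun t => dirPoint _ _ (hdir t) ∈ dirs A
  have hTcard : T.card ≤ (dirs A \ {dirPoint c d h'}).ncard := by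
    rw [← Set.ncard_coe_finset]
    refine Set.ncard_le_ncard_of_injOn (fun t => dirPoint _ _ (hdir t)) (fun t ht => ⟨?_, ?_⟩)
      (fun t _ u _ htu => ?_) (Set.toFinite _)
    · simpa [T] using ht
    · rw [Set.mem_singleton_iff, dirPoint_eq_iff]
      intro heq
      exact hne (by linear_combination heq)
    · have h1 : (u - t) * (a * d - b * c) = 0 := by
        linear_combination (dirPoint_eq_iff _ _).1 htu
      exact (sub_eq_zero.1 ((mul_eq_zero.1 h1).resolve_right (sub_ne_zero.2 hne))).symm
  obtain ⟨Q, hQ, hQP⟩ := exists_ne_of_not_injOn s (fun P => d * x P - c * y P)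
    (fun P => b * x P - a * y P) (by rw [← hA, ← hs, Set.ncard_coe_finset]) T
    (fun t ht => by
      have h1 : dirPoint _ _ (hdir t) ∉ dirs A := by simpa [T] using ht
      rw [dirPoint_mem_dirs_iff hxy, not_not] at h1
      rw [hs]
      convert h1 using 2
      ring)
    (by omega) (by rw [hs]; exact (dirPoint_mem_dirs_iff hxy a b h).1 hab)
    (i₀ := P) (by simpa [s] using hP)
  exact ⟨Q, by simpa [s] using hQ, hQP⟩

/-- if a set `A` of exactly `q` affine points determines fewer than
`(q+3)/2` directions `D`, then `A ∪ (L∞ \ D)` is a set without tangents. -/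
theorem stmt_3 [Fintype F] (p h : ℕ) (hp : p.Prime) (hodd : Odd p)
    (hcard : Fintype.card F = p ^ h)
    (A : Set (PGPoint F)) (hAaff : ∀ P ∈ A, P ∉ pointsOn (Linf F))
    (hAcard : A.ncard = p ^ h)
    (hD : (dirs A).ncard < (p ^ h + 3) / 2) :
    NoTangents (A ∪ (pointsOn (Linf F) \ dirs A)) := by
  classical
  have hq : 1 < Fintype.card F := Fintype.one_lt_card
  have hqodd : Odd (Fintype.card F) := hcard ▸ hodd.pow
  rw [← hcard] at hAcard hD
  have hD2 : 2 * (dirs A).ncard < Fintype.card F + 3 := by omega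
  have hcoord : ∀ P, ∃ x y : F, P ∈ A → P.submodule = Submodule.span F {![x, y, 1]} := by
    intro P
    by_cases hP : P ∈ A
    · obtain ⟨x, y, h⟩ := exists_submodule_eq_span_affine (hAaff P hP)
      exact ⟨x, y, fun _ => h⟩
    · exact ⟨0, 0, fun h => (hP h).elim⟩
  choose x y hxy using hcoord
  have hDinf : dirs A ⊆ pointsOn (Linf F) := by
    rintro d ⟨_, _, _, _, _, x1, y1, x2, y2, _, _, hd⟩
    simp [pointsOn, Linf, hd]
  rintro L hL ⟨P, ⟨hPS, hPL⟩, huniq⟩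
  by_cases hLinf : L = Linf F
  · subst hLinf
    have hsub : pointsOn (Linf F) ⊆ insert P (dirs A) := by
      intro Q hQ
      by_cases hQD : Q ∈ dirs A
      · exact Or.inr hQD
      · exact Or.inl (huniq Q ⟨Or.inr ⟨hQ, hQD⟩, hQ⟩)
    have h1 := Set.ncard_le_ncard hsub (Set.toFinite _)
    have h2 := Set.ncard_insert_le P (dirs A)
    have h3 := card_add_one_le_ncard_pointsOn_Linf (F := F)
    obtain ⟨k, hk⟩ := hqodd
    omega
  · obtain ⟨a, b, c, hab, hmem⟩ := exists_equation_of_isProjLine hL hLinf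
    have hAL : ∀ Q ∈ A, (Q ∈ pointsOn L ↔ b * x Q - a * y Q = c) := by
      intro Q hQ
      simp [pointsOn, hxy Q hQ, hmem]
    have hdL : dirPoint a b hab ∈ pointsOn L := by
      simp [pointsOn, dirPoint_submodule, hmem, mul_comm]
    by_cases hd : dirPoint a b hab ∈ dirs A
    · rcases hPS with hPA | ⟨hPinf, hPD⟩
      · obtain ⟨Q, hQA, hQ, hQP⟩ :=
          exists_ne_mem_of_dirPoint_mem_dirs hxy hAcard hDinf hD2 hab hd hPA
        exact hQP (huniq Q ⟨Or.inl hQA, (hAL Q hQA).2 (hQ.trans ((hAL P hPA).1 hPL))⟩)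
      · obtain ⟨a', b', h', rfl⟩ := exists_dirPoint_eq hPinf
        refine hPD ((dirPoint_eq_iff hab h').2 ?_ ▸ hd)
        have : b * a' - a * b' = 0 := by
          simpa [pointsOn, dirPoint_submodule, hmem] using hPL
        linear_combination -this
    · have hinj : Set.InjOn (fun Q => b * x Q - a * y Q) A := by
        by_contra hinj
        exact hd ((dirPoint_mem_dirs_iff hxy a b hab).2 hinj)
      have himage : (fun Q => b * x Q - a * y Q) '' A = Set.univ := by
        rw [Set.eq_univ_iff_ncard, hinj.ncard_image, hAcard,
          Nat.card_eq_fintype_card]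
      obtain ⟨Q, hQA, hQ⟩ : c ∈ (fun Q => b * x Q - a * y Q) '' A := himage ▸ Set.mem_univ c
      have h1 := huniq Q ⟨Or.inl hQA, (hAL Q hQA).2 hQ⟩
      have hdinf := dirPoint_mem_pointsOn_Linf a b hab
      have h2 := huniq _ ⟨Or.inr ⟨hdinf, hd⟩, hdL⟩
      exact hAaff Q hQA (h1.trans h2.symm ▸ hdinf)
end

section
/- Let q be a prime power and let S be a set without tangents in PG(2,q) of size q + k. Suppose the line L∞ contains exactly k points of S. Then the set A = S \ L∞ consists of exactly q affine points, and S ∩ L∞ equals the set of points of L∞ that are NOT directions determined by A (equivalently, S ∩ L∞ = L∞ \ D, where D is the set of directions determined by A). -/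
/-!
`PG(2,F)`: points are the 1-dimensional subspaces of `F^3` (modelled as the
projectivization of `Fin 3 → F`), lines are the 2-dimensional subspaces.
-/

variable {F : Type*} [Field F]

theorem mem_pointsOn_iff (L : Submodule F (Fin 3 → F)) (P : PGPoint F) :
    P ∈ pointsOn L ↔ P.rep ∈ L := by
  change P.submodule ≤ L ↔ _
  rw [P.submodule_eq, Submodule.span_singleton_le_iff_mem]

theorem mem_pointsOn_Linf_iff (P : PGPoint F) : P ∈ pointsOn (Linf F) ↔ P.rep 2 = 0 := by
  rw [mem_pointsOn_iff, Linf, LinearMap.mem_ker, LinearMap.proj_apply]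

theorem rep_ne_zero_of_rep_two_eq_zero {P : PGPoint F} (hP : P.rep 2 = 0) :
    P.rep 0 ≠ 0 ∨ P.rep 1 ≠ 0 := by
  by_contra! h
  refine P.rep_nonzero ?_
  ext i
  fin_cases i <;> simp [h, hP]

/-- Two nonzero vectors at infinity with vanishing cross product span the same line. -/
theorem span_singleton_eq_of_cross_eq_zero {v w : Fin 3 → F} (hv : v ≠ 0) (hw : w ≠ 0)
    (hv2 : v 2 = 0) (hw2 : w 2 = 0) (h : v 1 * w 0 = v 0 * w 1) :
    Submodule.span F {v} = Submodule.span F {w} := by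
  obtain ⟨c, rfl⟩ : ∃ c : F, v = c • w := by
    by_cases h0 : w 0 = 0
    · have h1 : w 1 ≠ 0 := fun h1 ↦ hw (by ext i; fin_cases i <;> simp [h0, h1, hw2])
      refine ⟨v 1 / w 1, ?_⟩
      have h2 : v 0 = 0 := by simpa [h0, h1] using h
      ext i
      fin_cases i <;> simp [h0, h1, h2, hv2, hw2]
    · refine ⟨v 0 / w 0, ?_⟩
      ext i
      fin_cases i <;> simp [h0, hv2, hw2]
      field_simp
      exact h
  have hc : c ≠ 0 := by rintro rfl; simp at hv
  exact Submodule.span_singleton_smul_eq hc.isUnit w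

/-- The linear form `v₁ X - v₀ Y - c Z`, whose zero locus is a line through `⟨(v₀, v₁, 0)⟩`. -/
def parallelForm (v : Fin 3 → F) (c : F) : (Fin 3 → F) →ₗ[F] F :=
  v 1 • LinearMap.proj 0 - v 0 • LinearMap.proj 1 - c • LinearMap.proj 2

theorem parallelForm_apply (v : Fin 3 → F) (c : F) (w : Fin 3 → F) :
    parallelForm v c w = v 1 * w 0 - v 0 * w 1 - c * w 2 := by
  simp [parallelForm]

theorem isProjLine_ker_parallelForm {v : Fin 3 → F} (hv : v 0 ≠ 0 ∨ v 1 ≠ 0) (c : F) :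
    IsProjLine F (LinearMap.ker (parallelForm v c)) := by
  have hne : parallelForm v c ≠ 0 := by
    intro h
    have h0 := LinearMap.congr_fun h ![1, 0, 0]
    have h1 := LinearMap.congr_fun h ![0, 1, 0]
    simp [parallelForm_apply] at h0 h1
    tauto
  have h := Module.Dual.finrank_ker_add_one_of_ne_zero hne
  rw [Module.finrank_fin_fun] at h
  unfold IsProjLine
  omega

/-- The value of `c` for which the line `v₁ X - v₀ Y - c Z = 0` contains the affine point `P`. -/
noncomputable def intercept (v : Fin 3 → F) (P : PGPoint F) : F :=
  (v 1 * P.rep 0 - v 0 * P.rep 1) / P.rep 2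

theorem mem_pointsOn_ker_parallelForm_iff (v : Fin 3 → F) (c : F) {P : PGPoint F}
    (hP : P.rep 2 ≠ 0) :
    P ∈ pointsOn (LinearMap.ker (parallelForm v c)) ↔ intercept v P = c := by
  rw [mem_pointsOn_iff, LinearMap.mem_ker, parallelForm_apply, intercept, div_eq_iff hP, sub_eq_zero]

theorem self_mem_pointsOn_ker_parallelForm (c : F) {P : PGPoint F} (hP : P.rep 2 = 0) :
    P ∈ pointsOn (LinearMap.ker (parallelForm P.rep c)) := by
  rw [mem_pointsOn_iff, LinearMap.mem_ker, parallelForm_apply, hP]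
  ring

/-- The only point at infinity of `v₁ X - v₀ Y - c Z = 0` is `⟨(v₀, v₁, 0)⟩`. -/
theorem eq_of_mem_pointsOn_ker_parallelForm {c : F} {P Q : PGPoint F} (hP : P.rep 2 = 0)
    (hQ : Q.rep 2 = 0) (h : Q ∈ pointsOn (LinearMap.ker (parallelForm P.rep c))) : Q = P := by
  rw [mem_pointsOn_iff, LinearMap.mem_ker, parallelForm_apply, hQ, mul_zero, sub_zero,
    sub_eq_zero] at h
  apply Projectivization.submodule_injective
  rw [P.submodule_eq, Q.submodule_eq]
  exact (span_singleton_eq_of_cross_eq_zero P.rep_nonzero Q.rep_nonzero hP hQ h).symm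

theorem submodule_eq_span_affine {P : PGPoint F} (hP : P.rep 2 ≠ 0) :
    P.submodule = Submodule.span F {![P.rep 0 / P.rep 2, P.rep 1 / P.rep 2, 1]} := by
  rw [P.submodule_eq, ← Submodule.span_singleton_smul_eq (inv_ne_zero hP).isUnit P.rep]
  congr 2
  ext i
  fin_cases i <;> simp [hP, div_eq_inv_mul]

theorem intercept_eq_of_submodule_eq (v : Fin 3 → F) {P : PGPoint F} {x y : F}
    (h : P.submodule = Submodule.span F {![x, y, 1]}) :
    intercept v P = v 1 * x - v 0 * y := by
  have hmem : P.rep ∈ Submodule.span F {![x, y, 1]} := by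
    rw [← h, P.submodule_eq]
    exact Submodule.mem_span_singleton_self _
  obtain ⟨t, ht⟩ := Submodule.mem_span_singleton.mp hmem
  have ht0 : t ≠ 0 := by
    rintro rfl
    exact P.rep_nonzero (by simpa using ht.symm)
  rw [intercept, ← ht]
  simp
  field_simp

/-- Two distinct affine points on a common line through `P` at infinity determine the
direction `P`. -/
theorem mem_dirs_of_intercept_eq {A : Set (PGPoint F)} {P Q R : PGPoint F} (hP : P.rep 2 = 0)
    (hQA : Q ∈ A) (hRA : R ∈ A) (hQ : Q.rep 2 ≠ 0) (hR : R.rep 2 ≠ 0) (hne : Q ≠ R)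
    (h : intercept P.rep Q = intercept P.rep R) : P ∈ dirs A := by
  have hQs := submodule_eq_span_affine hQ
  have hRs := submodule_eq_span_affine hR
  refine ⟨Q, hQA, R, hRA, hne, _, _, _, _, hQs, hRs, ?_⟩
  rw [intercept_eq_of_submodule_eq _ hQs, intercept_eq_of_submodule_eq _ hRs] at h
  rw [P.submodule_eq]
  refine span_singleton_eq_of_cross_eq_zero P.rep_nonzero ?_ hP rfl ?_
  · intro h0
    apply hne
    apply Projectivization.submodule_injective
    have e0 := congr_fun h0 0
    have e1 := congr_fun h0 1
    simp [sub_eq_zero] at e0 e1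
    rw [hQs, hRs, e0, e1]
  · simp
    linear_combination h

/-- A determined direction `P` lies on a line with two distinct points of `A`. -/
theorem exists_intercept_eq_of_mem_dirs {A : Set (PGPoint F)} {P : PGPoint F} (h : P ∈ dirs A) :
    ∃ Q ∈ A, ∃ R ∈ A, Q ≠ R ∧ intercept P.rep Q = intercept P.rep R := by
  obtain ⟨Q, hQ, R, hR, hne, x1, y1, x2, y2, hQs, hRs, hPs⟩ := h
  refine ⟨Q, hQ, R, hR, hne, ?_⟩
  rw [intercept_eq_of_submodule_eq _ hQs, intercept_eq_of_submodule_eq _ hRs]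
  have hmem : P.rep ∈ Submodule.span F {![x1 - x2, y1 - y2, 0]} := by
    rw [← hPs, P.submodule_eq]
    exact Submodule.mem_span_singleton_self _
  obtain ⟨t, ht⟩ := Submodule.mem_span_singleton.mp hmem
  rw [← ht]
  simp
  ring

/-- Every affine line through a point at infinity of a set without tangents contains an affine
point of the set. -/
theorem NoTangents.exists_intercept_eq {S : Set (PGPoint F)} (hS : NoTangents S) {P : PGPoint F}
    (hPS : P ∈ S) (hP : P.rep 2 = 0) (c : F) :
    ∃ Q ∈ S \ pointsOn (Linf F), intercept P.rep Q = c := by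
  by_contra! hno
  refine hS _ (isProjLine_ker_parallelForm (rep_ne_zero_of_rep_two_eq_zero hP) c)
    ⟨P, ⟨hPS, self_mem_pointsOn_ker_parallelForm c hP⟩, ?_⟩
  rintro Q ⟨hQS, hQ⟩
  by_cases hQ2 : Q.rep 2 = 0
  · exact eq_of_mem_pointsOn_ker_parallelForm hP hQ2 hQ
  · exact absurd ((mem_pointsOn_ker_parallelForm_iff _ _ hQ2).mp hQ)
      (hno Q ⟨hQS, fun h ↦ hQ2 ((mem_pointsOn_Linf_iff Q).mp h)⟩)

/-- A point at infinity missing from a set without tangents that has an affine point is a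
direction determined by its affine part. -/
theorem NoTangents.mem_dirs {S : Set (PGPoint F)} (hS : NoTangents S)
    (hne : (S \ pointsOn (Linf F)).Nonempty) {P : PGPoint F} (hPS : P ∉ S) (hP : P.rep 2 = 0) :
    P ∈ dirs (S \ pointsOn (Linf F)) := by
  obtain ⟨Q, hQA⟩ := hne
  have hQ : Q.rep 2 ≠ 0 := fun h ↦ hQA.2 ((mem_pointsOn_Linf_iff Q).mpr h)
  by_contra hdir
  refine hS _ (isProjLine_ker_parallelForm (rep_ne_zero_of_rep_two_eq_zero hP)
    (intercept P.rep Q)) ⟨Q, ⟨hQA.1, (mem_pointsOn_ker_parallelForm_iff _ _ hQ).mpr rfl⟩, ?_⟩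
  rintro R ⟨hRS, hR⟩
  by_cases hR2 : R.rep 2 = 0
  · exact absurd (eq_of_mem_pointsOn_ker_parallelForm hP hR2 hR ▸ hRS) hPS
  · by_contra hRQ
    have hRA : R ∈ S \ pointsOn (Linf F) := ⟨hRS, fun h ↦ hR2 ((mem_pointsOn_Linf_iff R).mp h)⟩
    exact hdir (mem_dirs_of_intercept_eq hP hRA hQA hR2 hQ hRQ
      ((mem_pointsOn_ker_parallelForm_iff _ _ hR2).mp hR))

/-- if a set without tangents `S` of size `q + k` meets the line at
infinity in exactly `k` points, then its affine part `A = S \ L∞` has exactly `q`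
points and `S ∩ L∞` is exactly the set of directions NOT determined by `A`. -/
theorem stmt_4 [Fintype F] (q k : ℕ) (hq : Fintype.card F = q)
    (S : Set (PGPoint F)) (hS : NoTangents S)
    (hcard : S.ncard = q + k)
    (hk : (S ∩ pointsOn (Linf F)).ncard = k) :
    (S \ pointsOn (Linf F)).ncard = q ∧
      S ∩ pointsOn (Linf F) = pointsOn (Linf F) \ dirs (S \ pointsOn (Linf F)) := by
  have hA : (S \ pointsOn (Linf F)).ncard = q := by
    have := Set.ncard_inter_add_ncard_sdiff_eq_ncard S (pointsOn (Linf F)) S.toFinite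
    omega
  refine ⟨hA, Set.ext fun P ↦ ⟨?_, ?_⟩⟩
  · rintro ⟨hPS, hPL⟩
    refine ⟨hPL, fun hdir ↦ ?_⟩
    have hP := (mem_pointsOn_Linf_iff P).mp hPL
    obtain ⟨Q, hQ, R, hR, hne, heq⟩ := exists_intercept_eq_of_mem_dirs hdir
    refine hne (Set.inj_on_of_surj_on_of_ncard_le (t := Set.univ)
      (fun Q _ ↦ intercept P.rep Q) (fun _ _ ↦ Set.mem_univ _) (fun c _ ↦ ?_) ?_ hQ hR heq)
    · obtain ⟨T, hT, hTc⟩ := hS.exists_intercept_eq hPS hP c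
      exact ⟨T, hT, hTc⟩
    · rw [hA, Set.ncard_univ, Nat.card_eq_fintype_card, hq]
  · rintro ⟨hPL, hdir⟩
    have hne : (S \ pointsOn (Linf F)).Nonempty := by
      apply Set.nonempty_of_ncard_ne_zero
      rw [hA, ← hq]
      exact Fintype.card_ne_zero
    by_contra hPS
    exact hdir (hS.mem_dirs hne (fun h ↦ hPS ⟨h, hPL⟩) ((mem_pointsOn_Linf_iff P).mp hPL))
end

section
/- Let p be a prime and let S be a non-empty set without tangents in PG(2,p) with |S| ≤ 2p. If there is a line L containing x points of S with 4x ≥ 2|S| − (p−1) (i.e. x ≥ |S|/2 − (p−1)/4), then S is the trivial set without tangents, i.e. there exist two distinct lines L1, L2 such that S is the set of all points on L1 or L2 different from L1 ∩ L2. -/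
/-!
`PG(2,F)`: points are the 1-dimensional subspaces of `F^3` (modelled as the
projectivization of `Fin 3 → F`), lines are the 2-dimensional subspaces.
-/

variable {F : Type*} [Field F]

/-- The trivial set without tangents: all points on one of two distinct lines,
different from their intersection point. -/
def IsTrivialSWT (S : Set (PGPoint F)) : Prop :=
  ∃ L1 L2 : Submodule F (Fin 3 → F), IsProjLine F L1 ∧ IsProjLine F L2 ∧ L1 ≠ L2 ∧
    S = (pointsOn L1 ∪ pointsOn L2) \ (pointsOn L1 ∩ pointsOn L2)

open Polynomial in
lemma natDegree_eq_of_derivative_mul_eq {p : ℕ} [CharP F p] {g h : F[X]}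
    (hg : g ≠ 0) (hh : h ≠ 0) (hgp : g.natDegree < p) (hhp : h.natDegree < p)
    (hW : derivative h * g = derivative g * h) : h.natDegree = g.natDegree := by
  have key : ∀ k : F[X], (X * derivative k).natDegree ≤ k.natDegree ∧
      (X * derivative k).coeff k.natDegree = k.natDegree * k.leadingCoeff := by
    intro k
    rcases Nat.eq_zero_or_pos k.natDegree with h0 | h0
    · rw [eq_C_of_natDegree_eq_zero h0]; simp
    · obtain ⟨m, hm⟩ := Nat.exists_eq_succ_of_ne_zero h0.ne'
      constructor
      · refine natDegree_mul_le.trans ?_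
        have := natDegree_derivative_le k
        rw [natDegree_X]; omega
      · rw [leadingCoeff, hm, coeff_X_mul, coeff_derivative]
        push_cast; ring
  have e : (X * derivative h) * g = (X * derivative g) * h := by linear_combination X * hW
  have e1 := coeff_mul_add_eq_of_natDegree_le (key h).1 (le_refl g.natDegree)
  have e2 := coeff_mul_add_eq_of_natDegree_le (key g).1 (le_refl h.natDegree)
  rw [e, add_comm, e2, (key g).2, (key h).2] at e1
  have e3 : (g.natDegree : F) * (g.leadingCoeff * h.leadingCoeff) =
      h.natDegree * (g.leadingCoeff * h.leadingCoeff) := by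
    simp only [leadingCoeff] at e1 ⊢; linear_combination e1
  have e4 := mul_right_cancel₀ (by simp [hg, hh]) e3
  exact (CharP.natCast_injOn_Iio F p hgp hhp e4).symm

open Polynomial in
lemma eq_C_mul_of_derivative_mul_eq {p : ℕ} [CharP F p] {g h : F[X]}
    (hg : g ≠ 0) (hgp : g.natDegree < p) (hhp : h.natDegree < p)
    (hW : derivative h * g = derivative g * h) : ∃ c, h = C c * g := by
  by_cases hh : h = 0
  · exact ⟨0, by simp [hh]⟩
  have hd := natDegree_eq_of_derivative_mul_eq hg hh hgp hhp hW
  have hgl : g.leadingCoeff ≠ 0 := leadingCoeff_ne_zero.mpr hg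
  refine ⟨h.leadingCoeff / g.leadingCoeff, ?_⟩
  set c := h.leadingCoeff / g.leadingCoeff with hc
  by_contra hne
  have hk : h - C c * g ≠ 0 := sub_ne_zero.mpr hne
  have hkd : (h - C c * g).natDegree ≤ g.natDegree :=
    (natDegree_sub_le _ _).trans (max_le hd.le (natDegree_C_mul_le _ _))
  have hW' : derivative (h - C c * g) * g = derivative g * (h - C c * g) := by
    simp only [derivative_sub, derivative_C_mul]
    linear_combination hW
  have hd' := natDegree_eq_of_derivative_mul_eq hg hk hgp (hkd.trans_lt hgp) hW'
  apply hk
  rw [← leadingCoeff_eq_zero, leadingCoeff, hd', coeff_sub, coeff_C_mul]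
  change _ - c * g.leadingCoeff = 0
  rw [hc, div_mul_cancel₀ _ hgl, leadingCoeff, hd, sub_self]

open Polynomial in
/-- A fully reducible lacunary polynomial `X ^ p * g + h` over `F_p` with `g` and `h` of small
degree is `(X ^ p - X) * g` or `(X ^ p + c) * g`. -/
lemma lacunary_of_splits [Fintype F] {p : ℕ} [CharP F p] (hcard : Fintype.card F = p)
    (s : Multiset F) {g h : F[X]} (hg : g ≠ 0)
    (hf : (s.map fun a => X - C a).prod = X ^ p * g + h)
    (hgd : 2 * (g.natDegree + 1) ≤ p - 1) (hhd : 2 * h.natDegree ≤ p - 1) :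
    X * g + h = 0 ∨ ∃ c, h = C c * g := by
  by_contra! hcon
  obtain ⟨h1, h2⟩ := hcon
  set W := derivative h * g - derivative g * h with hWdef
  have hW : W ≠ 0 := fun h0 => by
    obtain ⟨c, hc⟩ := eq_C_mul_of_derivative_mul_eq (p := p) hg (by omega) (by omega)
      (sub_eq_zero.mp h0)
    exact h2 c hc
  have hWf : W = derivative (X ^ p * g + h) * g - derivative g * (X ^ p * g + h) := by
    simp only [derivative_add, derivative_mul, derivative_X_pow, CharP.cast_eq_zero, hWdef]
    simp only [map_zero]
    ring
  have hprod : (X * g + h) * W ≠ 0 := mul_ne_zero h1 hW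
  have hs : s ≤ ((X * g + h) * W).roots := by
    classical
    rw [Multiset.le_iff_count]
    intro a
    rw [count_roots, rootMultiplicity_mul hprod]
    rcases Nat.eq_zero_or_pos (s.count a) with h0 | h0
    · omega
    have hdvd : (X - C a) ^ s.count a ∣ X ^ p * g + h := by
      rw [← hf]
      have : Multiset.replicate (s.count a) a ≤ s :=
        Multiset.le_count_iff_replicate_le.mp le_rfl
      simpa using Multiset.prod_dvd_prod_of_le (Multiset.map_le_map (f := fun a => X - C a) this)
    have hr1 : 1 ≤ rootMultiplicity a (X * g + h) := by
      rw [Nat.one_le_iff_ne_zero, ← Nat.pos_iff_ne_zero, rootMultiplicity_pos h1]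
      have : IsRoot (X ^ p * g + h) a :=
        dvd_iff_isRoot.mp ((dvd_pow_self _ h0.ne').trans hdvd)
      have e : a ^ p = a := by rw [← hcard]; exact FiniteField.pow_card a
      simpa [IsRoot, e] using this
    have hr2 : s.count a - 1 ≤ rootMultiplicity a W := by
      rw [le_rootMultiplicity_iff hW, hWf]
      exact dvd_sub ((pow_sub_one_dvd_derivative_of_pow_dvd hdvd).mul_right _)
        (((pow_dvd_pow _ (Nat.sub_le _ _)).trans hdvd).mul_left _)
    omega
  have hcs : s.card ≤ ((X * g + h) * W).natDegree :=
    (Multiset.card_le_card hs).trans (card_roots' _)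
  have hfd : s.card = p + g.natDegree := by
    rw [← natDegree_multiset_prod_X_sub_C_eq_card s, hf, natDegree_add_eq_left_of_natDegree_lt]
    · rw [natDegree_mul (by simp) hg, natDegree_X_pow]
    · rw [natDegree_mul (by simp) hg, natDegree_X_pow]
      have := (Fintype.card_pos : 0 < Fintype.card F)
      omega
  have d1 : (X * g + h).natDegree ≤ (p - 1) / 2 := by
    refine (natDegree_add_le _ _).trans (max_le (natDegree_mul_le.trans ?_) (by omega))
    rw [natDegree_X]; omega
  have d2 : W.natDegree ≤ g.natDegree + (p - 1) / 2 := by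
    have := natDegree_derivative_le h
    have := natDegree_derivative_le g
    refine (natDegree_sub_le _ _).trans (max_le (natDegree_mul_le.trans ?_)
      (natDegree_mul_le.trans ?_)) <;> omega
  have := natDegree_mul_le (p := X * g + h) (q := W)
  have := (Fintype.card_pos : 0 < Fintype.card F)
  omega

open Polynomial in
/-- The specialisation at slope `y` of the Rédei polynomial of a set of affine points; its roots
are the intercepts of the lines of slope `y` meeting the set. -/
noncomputable def redei (U : Finset (F × F)) (y : F) : F[X] :=
  ∏ q ∈ U, (X - C (q.2 - y * q.1))

open Polynomial in
lemma exists_redei_coeff_eq_eval (U : Finset (F × F)) (k : ℕ) :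
    ∃ P : F[X], (∀ m, U.card < k + m → P.coeff m = 0) ∧ ∀ y, (redei U y).coeff k = P.eval y := by
  classical
  induction U using Finset.induction_on generalizing k with
  | empty =>
    refine ⟨C ((1 : F[X]).coeff k), fun m hm => ?_, fun y => by simp [redei]⟩
    rw [coeff_C, coeff_one]
    simp at hm
    grind
  | insert q U hq ih =>
    have hr : ∀ y, redei (insert q U) y = redei U y * X - redei U y * C (q.2 - y * q.1) := by
      intro y; rw [redei, Finset.prod_insert hq, ← redei]; ring
    obtain ⟨P, hP, hPe⟩ := ih k
    have hlin : ∀ m, U.card + 1 < k + m → (P * (C q.2 - C q.1 * X)).coeff m = 0 := by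
      intro m hm
      have : P * (C q.2 - C q.1 * X) = C q.2 * P - C q.1 * (P * X) := by ring
      rw [this, coeff_sub, coeff_C_mul, coeff_C_mul, hP m (by omega)]
      cases m with
      | zero => simp
      | succ m => rw [coeff_mul_X, hP m (by omega)]; simp
    rw [Finset.card_insert_of_notMem hq]
    cases k with
    | zero =>
      refine ⟨-(P * (C q.2 - C q.1 * X)), fun m hm => ?_, fun y => ?_⟩
      · rw [coeff_neg, hlin m hm, neg_zero]
      · rw [hr, coeff_sub, coeff_mul_C, hPe, mul_coeff_zero, coeff_X_zero]
        simp only [eval_neg, eval_mul, eval_sub, eval_C, eval_X]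
        ring
    | succ k =>
      obtain ⟨Q, hQ, hQe⟩ := ih k
      refine ⟨Q - P * (C q.2 - C q.1 * X), fun m hm => ?_, fun y => ?_⟩
      · rw [coeff_sub, hlin m hm, hQ m (by omega), sub_zero]
      · rw [hr, coeff_sub, coeff_mul_C, coeff_mul_X, hPe, hQe]
        simp only [eval_mul, eval_sub, eval_C, eval_X]
        ring

open Polynomial in
lemma redei_coeff_eq_zero {U : Finset (F × F)} {A : Finset F} {k : ℕ}
    (hA : ∀ y ∈ A, (redei U y).coeff k = 0) (hk : U.card < A.card + k) (y : F) :
    (redei U y).coeff k = 0 := by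
  obtain ⟨P, hP, hPe⟩ := exists_redei_coeff_eq_eval U k
  suffices P = 0 by rw [hPe, this, eval_zero]
  by_contra hne
  have hd : P.natDegree < A.card := by
    by_contra! hle
    exact hne (leadingCoeff_eq_zero.mp (hP _ (by omega)))
  exact hne (eq_zero_of_natDegree_lt_card_of_eval_eq_zero' P A (fun y hy => by
    rw [← hPe, hA y hy]) hd)

open Polynomial in
lemma redei_monic (U : Finset (F × F)) (y : F) : (redei U y).Monic :=
  monic_prod_of_monic _ _ fun _ _ => monic_X_sub_C _

open Polynomial in
lemma natDegree_redei (U : Finset (F × F)) (y : F) : (redei U y).natDegree = U.card := by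
  rw [redei, natDegree_prod_of_monic _ _ fun _ _ => monic_X_sub_C _]
  simp only [natDegree_X_sub_C, Finset.sum_const, smul_eq_mul, mul_one]

open Polynomial in
lemma redei_isRoot_iff {U : Finset (F × F)} {y c : F} :
    (redei U y).IsRoot c ↔ ∃ q ∈ U, q.2 = y * q.1 + c := by
  simp only [redei, IsRoot, eval_prod, Finset.prod_eq_zero_iff, eval_sub, eval_X, eval_C]
  refine exists_congr fun q => and_congr_right fun _ => ⟨fun h => ?_, fun h => ?_⟩ <;>
    linear_combination -h

open Polynomial in
lemma X_pow_card_sub_X_dvd_redei [Fintype F] {p : ℕ} (hcard : Fintype.card F = p)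
    {U : Finset (F × F)} {y : F} (h : ∀ c, ∃ q ∈ U, q.2 = y * q.1 + c) :
    X ^ p - X ∣ redei U y := by
  have hp1 : 1 < Fintype.card F := Fintype.one_lt_card
  have hmon : (X ^ Fintype.card F - X : F[X]).Monic := monic_X_pow_sub (by simpa using hp1)
  have : (X ^ p - X : F[X]) = ∏ c : F, (X - C c) := by
    rw [← hcard]
    refine (prod_multiset_X_sub_C_of_monic_of_roots_card_eq hmon ?_).symm.trans ?_
    · rw [FiniteField.roots_X_pow_card_sub_X, FiniteField.X_pow_card_sub_X_natDegree_eq F hp1]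
      rfl
    · rw [FiniteField.roots_X_pow_card_sub_X]
      rfl
  rw [this]
  refine Finset.prod_dvd_of_coprime ?_ fun c _ => dvd_iff_isRoot.mpr (redei_isRoot_iff.mpr (h c))
  exact (pairwise_coprime_X_sub_C (s := fun c : F => c) Function.injective_id).set_pairwise _

lemma card_le_of_blocked [Fintype F] {U : Finset (F × F)} {y : F}
    (h : ∀ c, ∃ q ∈ U, q.2 = y * q.1 + c) : Fintype.card F ≤ U.card := by
  refine Finset.card_le_card_of_surjOn (s := U) (t := Finset.univ) (fun q => q.2 - y * q.1) ?_
  intro c _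
  obtain ⟨q, hq, e⟩ := h c
  exact ⟨q, hq, by simp [e]⟩

/-- If an affine point set of size at most roughly `5 p / 4` blocks all lines in sufficiently many
directions, then in each direction it blocks all lines or contains a line. -/
lemma blocked_or_contains_line [Fintype F] {p : ℕ} (hp : p.Prime) (hcard : Fintype.card F = p)
    {U : Finset (F × F)} {A : Finset F} (hne : A.Nonempty) (hA : A.card < p)
    (hblock : ∀ y ∈ A, ∀ c, ∃ q ∈ U, q.2 = y * q.1 + c)
    (hsize : U.card + A.card ≤ 2 * p)
    (hbig : 2 * (U.card + A.card) ≤ 4 * A.card + (p - 1)) (y : F) :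
    (∀ c, ∃ q ∈ U, q.2 = y * q.1 + c) ∨ ∃ c, ∀ a, (a, y * a + c) ∈ U := by
  classical
  open Polynomial in
  obtain ⟨y₀, hy₀⟩ := hne
  have hpu : p ≤ U.card := hcard ▸ card_le_of_blocked (hblock y₀ hy₀)
  have := hp.eq_two_or_odd
  have := hp.two_le
  have := Fact.mk hp
  have : CharP F p := charP_of_card_eq_prime hcard
  have hcoeff : ∀ k, p ≤ 2 * k → k < p → ∀ y, (redei U y).coeff k = 0 := by
    intro k hk hkp y
    refine redei_coeff_eq_zero (A := A) (fun y hy => ?_) (by omega) y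
    obtain ⟨Q, hQ⟩ := X_pow_card_sub_X_dvd_redei hcard (hblock y hy)
    have hdeg : U.card = p + Q.natDegree := by
      have hmon : (X ^ p - X : F[X]).Monic := monic_X_pow_sub (by simp; omega)
      have hd : (X ^ p - X : F[X]).natDegree = p := by
        rw [natDegree_sub_eq_left_of_natDegree_lt] <;> simp; omega
      have hQ0 : Q ≠ 0 := by
        rintro rfl
        exact (redei_monic U y).ne_zero (by simpa using hQ)
      rw [← natDegree_redei U y, hQ, hmon.natDegree_mul' hQ0, hd]
    obtain ⟨j, rfl⟩ : ∃ j, k = j + 1 := ⟨k - 1, by omega⟩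
    rw [hQ, sub_mul, coeff_sub, coeff_X_pow_mul', if_neg (by omega), coeff_X_mul,
      coeff_eq_zero_of_natDegree_lt (by omega), sub_zero]
  set g := redei U y /ₘ X ^ p with hg
  set h := redei U y %ₘ X ^ p with hh
  have hmon : (X ^ p : F[X]).Monic := monic_X_pow p
  have hf : redei U y = X ^ p * g + h := by
    rw [add_comm]; exact (modByMonic_add_div _ _).symm
  have hgd : g.natDegree = U.card - p := by
    rw [hg, natDegree_divByMonic _ hmon, natDegree_redei, natDegree_X_pow]
  have hhp : ∀ k, p ≤ k → h.coeff k = 0 := by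
    intro k hk
    refine coeff_eq_zero_of_degree_lt ((degree_modByMonic_lt _ hmon).trans_le ?_)
    rw [degree_X_pow]; exact_mod_cast hk
  have hhd : h.natDegree ≤ (p - 1) / 2 := by
    rw [natDegree_le_iff_coeff_eq_zero]
    intro k hk
    rcases le_or_gt p k with hpk | hpk
    · exact hhp k hpk
    · have := hcoeff k (by omega) hpk y
      rwa [hf, coeff_add, coeff_X_pow_mul', if_neg (by omega), zero_add] at this
  have hg0 : g ≠ 0 := by
    intro h0
    have : (redei U y).natDegree < p := by
      rw [hf, h0, mul_zero, zero_add]; omega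
    rw [natDegree_redei] at this
    omega
  have hms : ((U.val.map fun q => q.2 - y * q.1).map fun a => X - C a).prod = redei U y := by
    rw [Multiset.map_map]; rfl
  rcases lacunary_of_splits hcard (U.val.map fun q => q.2 - y * q.1) hg0 (hms.trans hf)
    (by omega) (by omega) with h1 | ⟨c, hc⟩
  · left
    intro c
    rw [← redei_isRoot_iff, hf, IsRoot, eq_neg_of_add_eq_zero_right h1]
    have e : c ^ p = c := by rw [← hcard]; exact FiniteField.pow_card c
    simp [e]
  · right
    refine ⟨-c, ?_⟩
    have e : c ^ p = c := by rw [← hcard]; exact FiniteField.pow_card c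
    have hdvd : (X - C (-c)) ^ p ∣ redei U y := by
      refine ⟨g, ?_⟩
      rw [hf, hc, C_neg, sub_neg_eq_add, add_pow_char, ← C_pow, e]; ring
    have hcount : p ≤ (U.filter fun q => -c = q.2 - y * q.1).card := by
      rw [← le_rootMultiplicity_iff (redei_monic U y).ne_zero, ← count_roots, ← hms,
        roots_multiset_prod_X_sub_C, Multiset.count_map] at hdvd
      exact hdvd
    have hinj : Set.InjOn Prod.fst
        ((U.filter fun q => -c = q.2 - y * q.1 : Finset (F × F)) : Set (F × F)) := by
      intro q hq r hr hqr
      simp only [Finset.coe_filter, Set.mem_ofPred_eq] at hq hr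
      refine Prod.ext hqr ?_
      have := hq.2.symm.trans hr.2
      rw [hqr] at this
      exact sub_left_injective this
    have himg : (U.filter fun q => -c = q.2 - y * q.1).image Prod.fst = Finset.univ := by
      apply Finset.eq_univ_of_card
      apply le_antisymm (Finset.card_le_univ _)
      rw [Finset.card_image_of_injOn hinj, hcard]
      exact hcount
    intro a
    have ha := Finset.mem_univ a
    rw [← himg, Finset.mem_image] at ha
    obtain ⟨q, hq, rfl⟩ := ha
    rw [Finset.mem_filter] at hq
    have : y * q.1 + -c = q.2 := by rw [hq.2]; ring
    rw [this]
    exact hq.1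

lemma two_mul_card_le {α β : Type*} [Fintype β] {U : Finset α} (φ : α → β)
    (hsurj : ∀ c, ∃ q ∈ U, φ q = c) (hpair : ∀ q ∈ U, ∃ r ∈ U, r ≠ q ∧ φ r = φ q) :
    2 * Fintype.card β ≤ U.card := by
  classical
  rw [Finset.card_eq_sum_card_fiberwise (f := φ) (t := Finset.univ) fun _ _ => by simp,
    mul_comm, ← Finset.card_univ, ← smul_eq_mul]
  refine Finset.card_nsmul_le_sum _ _ _ fun c _ => ?_
  obtain ⟨q, hq, rfl⟩ := hsurj c
  obtain ⟨r, hr, hne, e⟩ := hpair q hq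
  exact Finset.one_lt_card.mpr ⟨r, by simp [hr, e], q, by simp [hq], hne⟩

/-- A set without tangents missing the point at infinity of the vertical lines, in affine
coordinates: `U` is its affine part and `A` the set of its slopes at infinity. -/
lemma affine_trivial [Fintype F] {p : ℕ} (hp : p.Prime) (hcard : Fintype.card F = p)
    {U : Finset (F × F)} {A : Finset F} (hne : A.Nonempty ∨ U.Nonempty)
    (hblock : ∀ y ∈ A, ∀ c, ∃ q ∈ U, q.2 = y * q.1 + c)
    (hslope : ∀ y ∉ A, ∀ q ∈ U, ∃ r ∈ U, r ≠ q ∧ r.2 - y * r.1 = q.2 - y * q.1)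
    (hvert : ∀ q ∈ U, ∃ r ∈ U, r ≠ q ∧ r.1 = q.1)
    (hsize : U.card + A.card ≤ 2 * p)
    (hbig : 2 * (U.card + A.card) ≤ 4 * A.card + (p - 1)) :
    A = Finset.univ ∧ ∃ a, ∀ q, q ∈ U ↔ q.1 = a := by
  classical
  have hA : A.Nonempty := by
    by_contra hA
    obtain ⟨q, hq⟩ := hne.resolve_left hA
    rw [Finset.not_nonempty_iff_eq_empty] at hA
    subst hA
    have hpu : Fintype.card F ≤ U.card := by
      choose f hfU hfne hf using fun y => hslope y (Finset.notMem_empty y) q hq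
      refine Finset.card_le_card_of_injOn (s := Finset.univ) f (fun y _ => hfU y) ?_
      intro y _ z _ hyz
      by_contra hne
      have e1 := hf y
      have e2 := hf z
      rw [← hyz] at e2
      have e3 : (y - z) * ((f y).1 - q.1) = 0 := by linear_combination e2 - e1
      have e4 : (f y).1 = q.1 :=
        sub_eq_zero.mp ((mul_eq_zero.mp e3).resolve_left (sub_ne_zero.mpr hne))
      refine hfne y (Prod.ext e4 ?_)
      rw [e4] at e1
      exact sub_left_injective e1
    have := hp.two_le
    rw [Finset.card_empty] at *
    omega
  have hApos := hA.card_pos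
  obtain ⟨y₀, hy₀⟩ := hA
  have hpu : p ≤ U.card := hcard ▸ card_le_of_blocked (hblock y₀ hy₀)
  have hAu : A = Finset.univ := by
    by_contra hAu
    obtain ⟨y, hy⟩ := not_forall.mp (mt Finset.eq_univ_iff_forall.mpr hAu)
    have hAp : A.card < p := hcard ▸ Finset.card_lt_univ_of_notMem hy
    suffices 2 * p ≤ U.card by omega
    rcases blocked_or_contains_line hp hcard ⟨y₀, hy₀⟩ hAp hblock hsize hbig y with h | ⟨c, hc⟩
    · refine hcard ▸ two_mul_card_le (fun q => q.2 - y * q.1) (fun c => ?_) (hslope y hy)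
      obtain ⟨q, hq, e⟩ := h c
      exact ⟨q, hq, by simp [e]⟩
    · exact hcard ▸ two_mul_card_le Prod.fst (fun a => ⟨_, hc a, rfl⟩) hvert
  refine ⟨hAu, ?_⟩
  subst hAu
  have hUp : U.card = p := by
    rw [Finset.card_univ, hcard] at hsize; omega
  obtain ⟨q, hq⟩ : U.Nonempty := Finset.card_pos.mp (by have := hp.two_le; omega)
  have hall : ∀ r ∈ U, r.1 = q.1 := by
    intro r hr
    by_contra hne
    set y := (r.2 - q.2) / (r.1 - q.1) with hy
    have hinj : Set.InjOn (fun t : F × F => t.2 - y * t.1) U := by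
      refine Finset.injOn_of_surjOn_of_card_le (t := Finset.univ) _
        (fun _ _ => Finset.mem_coe.mpr (Finset.mem_univ _)) ?_ ?_
      · intro c _
        obtain ⟨t, ht, e⟩ := hblock y (Finset.mem_univ y) c
        exact ⟨t, ht, by simp [e]⟩
      · rw [Finset.card_univ]; omega
    refine hne (congrArg Prod.fst (hinj hr hq ?_))
    have : y * (r.1 - q.1) = r.2 - q.2 := div_mul_cancel₀ _ (sub_ne_zero.mpr hne)
    dsimp only
    linear_combination -this
  have hU : U = {q.1} ×ˢ Finset.univ := by
    refine Finset.eq_of_subset_of_card_le (fun r hr => ?_) ?_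
    · exact Finset.mem_product.mpr ⟨Finset.mem_singleton.mpr (hall r hr), Finset.mem_univ _⟩
    · simp [hUp, hcard]
  refine ⟨q.1, fun r => ?_⟩
  rw [hU, Finset.mem_product, Finset.mem_singleton]
  exact and_iff_left (Finset.mem_univ _)

lemma NoTangents.exists_ne {S : Set (PGPoint F)} (hS : NoTangents S)
    {ℓ : Submodule F (Fin 3 → F)} (hℓ : IsProjLine F ℓ) {P : PGPoint F} (hP : P ∈ S)
    (hPℓ : P ∈ pointsOn ℓ) : ∃ Q ∈ S, Q ∈ pointsOn ℓ ∧ Q ≠ P := by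
  by_contra! h
  exact hS ℓ hℓ ⟨P, ⟨hP, hPℓ⟩, fun Q hQ => h Q hQ.1 hQ.2⟩

section Coordinates

variable (B : Module.Basis (Fin 3) F (Fin 3 → F))

/-- The point with homogeneous coordinates `v` with respect to the basis `B`. -/
noncomputable def coordPoint (v : Fin 3 → F) (hv : v ≠ 0) : PGPoint F :=
  Projectivization.mk F (B.equivFun.symm v) fun h =>
    hv (B.equivFun.symm.map_eq_zero_iff.mp h)

/-- The line with dual coordinates `w` with respect to the basis `B`. -/
noncomputable def coordLine (w : Fin 3 → F) : Submodule F (Fin 3 → F) :=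
  LinearMap.ker (dotProductBilin F F w ∘ₗ B.equivFun.toLinearMap)

lemma coordPoint_mem_coordLine {v : Fin 3 → F} (hv : v ≠ 0) {w : Fin 3 → F} :
    coordPoint B v hv ∈ pointsOn (coordLine B w) ↔ w ⬝ᵥ v = 0 := by
  change (coordPoint B v hv).submodule ≤ _ ↔ _
  rw [coordPoint, Projectivization.submodule_mk, Submodule.span_singleton_le_iff_mem, coordLine,
    LinearMap.mem_ker, LinearMap.comp_apply, LinearEquiv.coe_coe, LinearEquiv.apply_symm_apply]
  rfl

lemma isProjLine_coordLine {w : Fin 3 → F} (hw : w ≠ 0) : IsProjLine F (coordLine B w) := by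
  have hne : dotProductBilin F F w ∘ₗ B.equivFun.toLinearMap ≠ 0 := by
    intro h
    apply hw
    refine dotProduct_eq_zero_iff.mp fun v => ?_
    have hv := LinearMap.congr_fun h (B.equivFun.symm v)
    rwa [LinearMap.comp_apply, LinearEquiv.coe_coe, LinearEquiv.apply_symm_apply] at hv
  have h1 := Module.Dual.finrank_ker_add_one_of_ne_zero hne
  rw [Module.finrank_fin_fun] at h1
  unfold IsProjLine coordLine
  omega

/-- The affine point `q`, in the chart whose line at infinity is `B 0 = 0`. -/
noncomputable def affPt (q : F × F) : PGPoint F :=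
  coordPoint B ![1, q.1, q.2] fun h => one_ne_zero (congrFun h 0)

/-- The point at infinity of the lines of slope `y`. -/
noncomputable def dirPt (y : F) : PGPoint F :=
  coordPoint B ![0, 1, y] fun h => one_ne_zero (congrFun h 1)

/-- The point at infinity of the vertical lines. -/
noncomputable def infPt : PGPoint F :=
  coordPoint B ![0, 0, 1] fun h => one_ne_zero (congrFun h 2)

variable {B}

lemma affPt_mem {q : F × F} {a b c : F} :
    affPt B q ∈ pointsOn (coordLine B ![a, b, c]) ↔ a + b * q.1 + c * q.2 = 0 := by
  rw [affPt, coordPoint_mem_coordLine]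
  simp [dotProduct, Fin.sum_univ_three]

lemma dirPt_mem {y a b c : F} :
    dirPt B y ∈ pointsOn (coordLine B ![a, b, c]) ↔ b + c * y = 0 := by
  rw [dirPt, coordPoint_mem_coordLine]
  simp [dotProduct, Fin.sum_univ_three]

lemma infPt_mem {a b c : F} :
    infPt B ∈ pointsOn (coordLine B ![a, b, c]) ↔ c = 0 := by
  rw [infPt, coordPoint_mem_coordLine]
  simp [dotProduct, Fin.sum_univ_three]

lemma coordPoint_eq_iff {v w : Fin 3 → F} (hv : v ≠ 0) (hw : w ≠ 0) :
    coordPoint B v hv = coordPoint B w hw ↔ ∃ a : F, a • w = v := by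
  rw [coordPoint, coordPoint, Projectivization.mk_eq_mk_iff']
  simp only [← map_smul, EmbeddingLike.apply_eq_iff_eq]

lemma affPt_injective : Function.Injective (affPt B) := by
  intro q r h
  obtain ⟨a, ha⟩ := (coordPoint_eq_iff _ _).mp h
  have h0 := congrFun ha 0
  have h1 := congrFun ha 1
  have h2 := congrFun ha 2
  simp at h0 h1 h2
  subst h0
  ext <;> simp_all

lemma dirPt_injective : Function.Injective (dirPt B) := by
  intro q r h
  obtain ⟨a, ha⟩ := (coordPoint_eq_iff _ _).mp h
  have h1 := congrFun ha 1
  have h2 := congrFun ha 2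
  simp at h1 h2
  subst h1
  simpa using h2.symm

lemma point_cases (P : PGPoint F) :
    (∃ q, P = affPt B q) ∨ (∃ y, P = dirPt B y) ∨ P = infPt B := by
  obtain ⟨v, hv, rfl⟩ : ∃ v, ∃ hv : v ≠ 0, P = coordPoint B v hv :=
    ⟨B.equivFun P.rep, by simpa using P.rep_nonzero, by simp [coordPoint]⟩
  by_cases h0 : v 0 = 0
  · right
    by_cases h1 : v 1 = 0
    · right
      refine (coordPoint_eq_iff _ _).mpr ⟨v 2, ?_⟩
      ext i; fin_cases i <;> simp [h0, h1]
    · left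
      refine ⟨v 2 / v 1, (coordPoint_eq_iff _ _).mpr ⟨v 1, ?_⟩⟩
      ext i; fin_cases i <;> simp [h0, mul_div_cancel₀, h1]
  · left
    refine ⟨(v 1 / v 0, v 2 / v 0), (coordPoint_eq_iff _ _).mpr ⟨v 0, ?_⟩⟩
    ext i; fin_cases i <;> simp [mul_div_cancel₀, h0]

lemma exists_coordinates {L : Submodule F (Fin 3 → F)} (hL : IsProjLine F L) {P : PGPoint F}
    (hP : P ∈ pointsOn L) :
    ∃ B : Module.Basis (Fin 3) F (Fin 3 → F), L = coordLine B ![1, 0, 0] ∧ P = infPt B := by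
  have hPL : P.rep ∈ L := by
    change P.submodule ≤ L at hP
    rwa [Projectivization.submodule_eq, Submodule.span_singleton_le_iff_mem] at hP
  have hL2 : Module.finrank F L = 2 := hL
  obtain ⟨e, heL, he⟩ : ∃ e ∈ L, e ∉ F ∙ P.rep := by
    by_contra! h
    have := Submodule.finrank_mono (show L ≤ F ∙ P.rep from h)
    rw [finrank_span_singleton P.rep_nonzero] at this
    omega
  obtain ⟨z, hz⟩ : ∃ z, z ∉ L := by
    by_contra! h
    rw [Submodule.eq_top_iff'.mpr h, finrank_top, Module.finrank_fin_fun] at hL2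
    omega
  have hli : LinearIndependent F ![z, e, P.rep] := by
    refine linearIndependent_finCons.mpr ⟨?_, fun hz' => hz (Submodule.span_le.mpr ?_ hz')⟩
    · rw [LinearIndependent.pair_symm_iff, LinearIndependent.pair_iff' P.rep_nonzero]
      exact fun a ha => he (Submodule.mem_span_singleton.mpr ⟨a, ha⟩)
    · rintro _ ⟨i, rfl⟩
      fin_cases i
      exacts [heL, hPL]
  let B := basisOfLinearIndependentOfCardEqFinrank hli (by simp)
  have hB : ⇑B = ![z, e, P.rep] := coe_basisOfLinearIndependentOfCardEqFinrank _ _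
  have hrepr : ∀ v, v = B.equivFun v 0 • z + B.equivFun v 1 • e + B.equivFun v 2 • P.rep := by
    intro v
    conv_lhs => rw [← B.sum_equivFun v]
    simp [Fin.sum_univ_three, hB]
  refine ⟨B, ?_, ?_⟩
  · symm
    refine Submodule.eq_of_le_of_finrank_eq (fun v hv => ?_) ?_
    · have h0 : B.equivFun v 0 = 0 := by
        simpa [coordLine, LinearMap.mem_ker, dotProduct, Fin.sum_univ_three] using hv
      rw [hrepr v, h0, zero_smul, zero_add]
      exact L.add_mem (L.smul_mem _ heL) (L.smul_mem _ hPL)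
    · exact (isProjLine_coordLine B fun h => one_ne_zero (congrFun h 0)).trans hL.symm
  · conv_lhs => rw [← P.mk_rep]
    rw [infPt, coordPoint]
    congr 1
    simp [Module.Basis.equivFun_symm_apply, Fin.sum_univ_three, hB]

variable {S : Set (PGPoint F)}

lemma exists_affPt_of_dirPt_mem (hS : NoTangents S) {y : F} (hy : dirPt B y ∈ S) (c : F) :
    ∃ q, affPt B q ∈ S ∧ q.2 = y * q.1 + c := by
  obtain ⟨Q, hQS, hQ, hne⟩ := hS.exists_ne
    (isProjLine_coordLine B (w := ![-c, -y, 1]) fun h => one_ne_zero (congrFun h 2)) hy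
    (dirPt_mem.mpr (by ring))
  rcases point_cases (B := B) Q with ⟨q, rfl⟩ | ⟨z, rfl⟩ | rfl
  · exact ⟨q, hQS, by linear_combination affPt_mem.mp hQ⟩
  · exact absurd (congrArg _ (by linear_combination dirPt_mem.mp hQ)) hne
  · exact absurd (infPt_mem.mp hQ) one_ne_zero

lemma exists_affPt_of_dirPt_notMem (hS : NoTangents S) {y : F} (hy : dirPt B y ∉ S)
    {q : F × F} (hq : affPt B q ∈ S) :
    ∃ r, affPt B r ∈ S ∧ r ≠ q ∧ r.2 - y * r.1 = q.2 - y * q.1 := by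
  obtain ⟨Q, hQS, hQ, hne⟩ := hS.exists_ne
    (isProjLine_coordLine B (w := ![-(q.2 - y * q.1), -y, 1]) fun h => one_ne_zero (congrFun h 2))
    hq (affPt_mem.mpr (by ring))
  rcases point_cases (B := B) Q with ⟨r, rfl⟩ | ⟨z, rfl⟩ | rfl
  · exact ⟨r, hQS, fun h => hne (congrArg _ h), by linear_combination affPt_mem.mp hQ⟩
  · have : z = y := by linear_combination dirPt_mem.mp hQ
    exact absurd (this ▸ hQS) hy
  · exact absurd (infPt_mem.mp hQ) one_ne_zero

lemma exists_affPt_of_infPt_notMem (hS : NoTangents S) (hinf : infPt B ∉ S)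
    {q : F × F} (hq : affPt B q ∈ S) : ∃ r, affPt B r ∈ S ∧ r ≠ q ∧ r.1 = q.1 := by
  obtain ⟨Q, hQS, hQ, hne⟩ := hS.exists_ne
    (isProjLine_coordLine B (w := ![-q.1, 1, 0]) fun h => one_ne_zero (congrFun h 1))
    hq (affPt_mem.mpr (by ring))
  rcases point_cases (B := B) Q with ⟨r, rfl⟩ | ⟨z, rfl⟩ | rfl
  · exact ⟨r, hQS, fun h => hne (congrArg _ h), by linear_combination affPt_mem.mp hQ⟩
  · exact absurd (dirPt_mem.mp hQ) (by simp)
  · exact absurd hQS hinf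

lemma ncard_diff_pointsOn (U : Finset (F × F)) (hU : ∀ q, q ∈ U ↔ affPt B q ∈ S) :
    (S \ pointsOn (coordLine B ![1, 0, 0])).ncard = U.card := by
  have : S \ pointsOn (coordLine B ![1, 0, 0]) = affPt B '' U := by
    ext P
    rcases point_cases (B := B) P with ⟨q, rfl⟩ | ⟨z, rfl⟩ | rfl
    · rw [affPt_injective.mem_set_image]
      simp [affPt_mem, hU]
    · suffices ∀ q ∈ U, affPt B q ≠ dirPt B z by simpa [dirPt_mem] using this
      intro q _ h
      have := (dirPt_mem (B := B) (y := z) (a := 1) (b := 0) (c := 0)).mpr (by simp)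
      rw [← h, affPt_mem] at this
      simp at this
    · suffices ∀ q ∈ U, affPt B q ≠ infPt B by simpa [infPt_mem] using this
      intro q _ h
      have := (infPt_mem (B := B) (a := 1) (b := 0) (c := 0)).mpr rfl
      rw [← h, affPt_mem] at this
      simp at this
  rw [this, Set.ncard_image_of_injective _ affPt_injective, Set.ncard_coe_finset]

lemma dirPt_ne_infPt (y : F) : dirPt B y ≠ infPt B := by
  intro h
  have := (infPt_mem (B := B) (a := 0) (b := 1) (c := 0)).mpr rfl
  rw [← h, dirPt_mem] at this
  simp at this

lemma ncard_inter_pointsOn (A : Finset F) (hA : ∀ y, y ∈ A ↔ dirPt B y ∈ S)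
    (hinf : infPt B ∉ S) :
    (S ∩ pointsOn (coordLine B ![1, 0, 0])).ncard = A.card := by
  have : S ∩ pointsOn (coordLine B ![1, 0, 0]) = dirPt B '' A := by
    ext P
    rcases point_cases (B := B) P with ⟨q, rfl⟩ | ⟨z, rfl⟩ | rfl
    · suffices ∀ y ∈ A, dirPt B y ≠ affPt B q by simpa [affPt_mem] using this
      intro y _ h
      have := (dirPt_mem (B := B) (y := y) (a := 1) (b := 0) (c := 0)).mpr (by simp)
      rw [h, affPt_mem] at this
      simp at this
    · rw [dirPt_injective.mem_set_image]
      simp [dirPt_mem, hA]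
    · simp [hinf, dirPt_ne_infPt]
  rw [this, Set.ncard_image_of_injective _ dirPt_injective, Set.ncard_coe_finset]

end Coordinates

lemma not_pointsOn_subset [Fintype F] {S : Set (PGPoint F)} (hS : NoTangents S)
    (hsize : S.ncard ≤ 2 * Fintype.card F) {L : Submodule F (Fin 3 → F)} (hL : IsProjLine F L) :
    ¬ pointsOn L ⊆ S := by
  classical
  intro hLS
  obtain ⟨v, hvL, hv⟩ : ∃ v ∈ L, v ≠ 0 := by
    refine (Submodule.ne_bot_iff L).mp ?_
    rintro rfl
    have : Module.finrank F (⊥ : Submodule F (Fin 3 → F)) = 2 := hL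
    simp at this
  have hP : Projectivization.mk F v hv ∈ pointsOn L := by
    change Projectivization.submodule _ ≤ L
    rwa [Projectivization.submodule_mk, Submodule.span_singleton_le_iff_mem]
  obtain ⟨B, rfl, -⟩ := exists_coordinates hL hP
  have hU := ncard_diff_pointsOn (B := B) (S := S) (Finset.univ.filter fun q => affPt B q ∈ S)
    (by simp)
  have hblock := card_le_of_blocked (y := 0) (U := Finset.univ.filter fun q => affPt B q ∈ S)
    fun c => by
      obtain ⟨q, hq, e⟩ := exists_affPt_of_dirPt_mem hS
        (hLS (dirPt_mem (B := B) (y := 0).mpr (by simp))) c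
      exact ⟨q, by simpa using hq, e⟩
  have hsub : insert (infPt B) (Set.range (dirPt B)) ⊆
      S ∩ pointsOn (coordLine B ![1, 0, 0]) := by
    rw [Set.inter_eq_self_of_subset_right hLS, Set.insert_subset_iff]
    refine ⟨infPt_mem.mpr rfl, ?_⟩
    rintro _ ⟨y, rfl⟩
    exact dirPt_mem.mpr (by simp)
  have hfin : S.Finite := Set.toFinite S
  have h1 := Set.ncard_le_ncard hsub (hfin.inter_of_left _)
  rw [Set.ncard_insert_of_notMem (by rintro ⟨y, hy⟩; exact dirPt_ne_infPt y hy) (Set.toFinite _),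
    Set.ncard_range_of_injective dirPt_injective, Nat.card_eq_fintype_card] at h1
  have := Set.ncard_inter_add_ncard_sdiff_eq_ncard S (pointsOn (coordLine B ![1, 0, 0])) hfin
  omega

/-- a non-empty set without tangents `S` in `PG(2,p)` with
`|S| ≤ 2p` having a line with `x` points of `S` where `4x ≥ 2|S| - (p-1)`
is trivial. -/
theorem stmt_7 [Fintype F] (p : ℕ) (hp : p.Prime) (hcard : Fintype.card F = p)
    (S : Set (PGPoint F)) (hne : S.Nonempty) (hS : NoTangents S)
    (hsize : S.ncard ≤ 2 * p)
    (L : Submodule F (Fin 3 → F)) (hL : IsProjLine F L) (x : ℕ)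
    (hx : (S ∩ pointsOn L).ncard = x)
    (hbig : 2 * S.ncard ≤ 4 * x + (p - 1)) :
    IsTrivialSWT S := by
  classical
  obtain ⟨P, hPL, hPS⟩ := Set.not_subset.mp (not_pointsOn_subset hS (hcard ▸ hsize) hL)
  obtain ⟨B, rfl, rfl⟩ := exists_coordinates hL hPL
  set U := Finset.univ.filter fun q => affPt B q ∈ S with hUdef
  set A := Finset.univ.filter fun y => dirPt B y ∈ S with hAdef
  have hU : ∀ q, q ∈ U ↔ affPt B q ∈ S := by simp [hUdef]
  have hA : ∀ y, y ∈ A ↔ dirPt B y ∈ S := by simp [hAdef]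
  have hUcard := ncard_diff_pointsOn U hU
  have hAcard := ncard_inter_pointsOn A hA hPS
  have hsum := Set.ncard_inter_add_ncard_sdiff_eq_ncard S (pointsOn (coordLine B ![1, 0, 0]))
    (Set.toFinite S)
  have hne' : A.Nonempty ∨ U.Nonempty := by
    obtain ⟨Q, hQ⟩ := hne
    rcases point_cases (B := B) Q with ⟨q, rfl⟩ | ⟨y, rfl⟩ | rfl
    · exact Or.inr ⟨q, (hU q).mpr hQ⟩
    · exact Or.inl ⟨y, (hA y).mpr hQ⟩
    · exact absurd hQ hPS
  obtain ⟨hAu, a, ha⟩ := affine_trivial hp hcard hne'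
    (fun y hy c => by simpa only [hU] using exists_affPt_of_dirPt_mem hS ((hA y).mp hy) c)
    (fun y hy q hq => by
      simpa only [hU] using
        exists_affPt_of_dirPt_notMem hS (mt (hA y).mpr hy) ((hU q).mp hq))
    (fun q hq => by
      simpa only [hU] using exists_affPt_of_infPt_notMem hS hPS ((hU q).mp hq))
    (by omega) (by omega)
  refine ⟨coordLine B ![1, 0, 0], coordLine B ![-a, 1, 0], hL,
    isProjLine_coordLine B fun h => one_ne_zero (congrFun h 1), fun h => ?_, ?_⟩
  · have := (affPt_mem (B := B) (q := (a, 0)) (a := -a) (b := 1) (c := 0)).mpr (by simp)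
    rw [← h, affPt_mem] at this
    simp at this
  · ext Q
    rcases point_cases (B := B) Q with ⟨q, rfl⟩ | ⟨y, rfl⟩ | rfl
    · simp only [Set.mem_sdiff, Set.mem_union, Set.mem_inter_iff, affPt_mem, ← hU, ha]
      simp [neg_add_eq_zero, eq_comm]
    · simp only [Set.mem_sdiff, Set.mem_union, Set.mem_inter_iff, dirPt_mem, ← hA, hAu]
      simp
    · simp [infPt_mem, hPS]
end

section
/- Let p be a prime and let S be a non-empty set without tangents in PG(2,p) with |S| < 2p. Then every line L of PG(2,p) contains at most |S|/2 − (p−5)/4 points of S; that is, 4·|L ∩ S| ≤ 2|S| − p + 5 for every line L. -/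
/-!
`PG(2,F)`: points are the 1-dimensional subspaces of `F^3` (modelled as the
projectivization of `Fin 3 → F`), lines are the 2-dimensional subspaces.
-/

variable {F : Type*} [Field F]

open Polynomial

theorem Polynomial.natDegree_eq_of_derivative_mul_eq {p : ℕ} [CharP F p]
    {f h : F[X]} (hf : f.natDegree < p) (hh : h.natDegree < p) (hf0 : f ≠ 0) (hh0 : h ≠ 0)
    (heq : derivative f * h = f * derivative h) : h.natDegree = f.natDegree := by
  have key : ∀ g q : F[X],
      (X * derivative g * q).coeff (g.natDegree + q.natDegree) =
        g.natDegree * (g.leadingCoeff * q.leadingCoeff) := by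
    intro g q
    have hd : (X * derivative g).natDegree ≤ g.natDegree := by
      rw [natDegree_le_iff_coeff_eq_zero]
      intro n hn
      cases n with
      | zero => simp
      | succ n => rw [coeff_X_mul, coeff_derivative, coeff_eq_zero_of_natDegree_lt hn, zero_mul]
    rw [coeff_mul_add_eq_of_natDegree_le hd le_rfl]
    have : (X * derivative g).coeff g.natDegree = g.natDegree * g.leadingCoeff := by
      rcases hn : g.natDegree with _ | n
      · simp
      · rw [coeff_X_mul, coeff_derivative, leadingCoeff, hn]
        push_cast
        ring
    rw [this, leadingCoeff, leadingCoeff, mul_assoc]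
  have h1 := key f h
  have h2 := key h f
  have h3 : X * derivative f * h = X * derivative h * f := by
    rw [mul_assoc, heq]; ring
  rw [h3, add_comm, h2, mul_comm f.leadingCoeff] at h1
  have hne : h.leadingCoeff * f.leadingCoeff ≠ 0 := by simp [hf0, hh0]
  have h4 := mul_right_cancel₀ hne h1
  exact CharP.natCast_injOn_Iio F p hh hf h4

theorem Polynomial.Monic.exists_eq_C_mul_of_derivative_mul_eq {p : ℕ}
    [CharP F p] {f h : F[X]} (hmon : f.Monic) (hf : f.natDegree < p) (hh : h.natDegree < p)
    (heq : derivative f * h = f * derivative h) : ∃ c, h = C c * f := by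
  refine ⟨h.coeff f.natDegree, ?_⟩
  by_contra hne
  set g := h - C (h.coeff f.natDegree) * f with hg
  have hg0 : g ≠ 0 := sub_ne_zero.mpr hne
  have hgdeg : g.natDegree < p :=
    (natDegree_sub_le _ _).trans_lt (max_lt hh ((natDegree_C_mul_le _ _).trans_lt hf))
  have hgeq : derivative f * g = f * derivative g := by
    simp only [hg, derivative_sub, derivative_C_mul, mul_sub, heq]
    ring
  have hd := natDegree_eq_of_derivative_mul_eq hf hgdeg hmon.ne_zero hg0 hgeq
  apply hg0
  rw [← leadingCoeff_eq_zero, Polynomial.leadingCoeff, hd, hg]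
  simp [hmon.coeff_natDegree]

/-- A fully reducible polynomial `X ^ p * f + h` over the prime field, with `f` and `h` of small
degree, either vanishes on the whole field or has a `p`-fold root. -/
theorem Polynomial.Splits.lacunary [Fintype F] {p e m : ℕ} [CharP F p]
    (hp : p.Prime) (hcard : Fintype.card F = p) {R f h : F[X]} (hsplit : R.Splits)
    (hR : R = X ^ p * f + h) (hRdeg : R.natDegree = p + e) (hmon : f.Monic)
    (hf : f.natDegree = e) (hh : h.natDegree ≤ m) (hem : e + 1 ≤ m) (hm : 2 * m ≤ p) :
    X * f + h = 0 ∨ ∃ c, R = (X + C c) ^ p * f := by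
  have : Fact p.Prime := ⟨hp⟩
  have hp2 := hp.two_le
  by_cases hQ : (X * f + h) * (derivative f * h - f * derivative h) = 0
  · rcases mul_eq_zero.mp hQ with h0 | h0
    · exact Or.inl h0
    · right
      obtain ⟨c, hc⟩ := hmon.exists_eq_C_mul_of_derivative_mul_eq (p := p) (by omega) (by omega)
        (sub_eq_zero.mp h0)
      refine ⟨c, ?_⟩
      have hcp : c ^ p = c := by rw [← hcard, FiniteField.pow_card]
      rw [add_pow_char, ← C_pow, hcp, hR, hc]
      ring
  · exfalso
    have hR0 : R ≠ 0 := by rintro rfl; simp at hRdeg; omega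
    have hder : derivative R = X ^ p * derivative f + derivative h := by
      simp [hR, derivative_mul, derivative_X_pow]
    have hle : R.roots ≤ ((X * f + h) * (derivative f * h - f * derivative h)).roots := by
      classical
      rw [Multiset.le_iff_count]
      intro r
      rw [count_roots, count_roots, rootMultiplicity_mul hQ]
      rcases Nat.eq_zero_or_pos (R.rootMultiplicity r) with h0 | hpos
      · omega
      have hroot : R.eval r = 0 := (rootMultiplicity_pos hR0).mp hpos
      have h1 : 0 < (X * f + h).rootMultiplicity r := by
        rw [rootMultiplicity_pos (left_ne_zero_of_mul hQ), IsRoot]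
        have hrp : r ^ p = r := by rw [← hcard, FiniteField.pow_card]
        rw [hR] at hroot
        simpa [hrp] using hroot
      have h2 : R.rootMultiplicity r - 1 ≤
          (derivative f * h - f * derivative h).rootMultiplicity r := by
        rw [le_rootMultiplicity_iff (right_ne_zero_of_mul hQ)]
        have e1 : derivative f * h - f * derivative h = derivative f * R - f * derivative R := by
          rw [hder]; nth_rewrite 1 [hR]; ring
        rw [e1]
        have d1 : (X - C r) ^ (R.rootMultiplicity r - 1) ∣ R :=
          (pow_dvd_pow _ (Nat.sub_le _ _)).trans (pow_rootMultiplicity_dvd R r)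
        have d2 : (X - C r) ^ (R.rootMultiplicity r - 1) ∣ derivative R :=
          pow_sub_one_dvd_derivative_of_pow_dvd (pow_rootMultiplicity_dvd R r)
        exact dvd_sub (d1.mul_left _) (d2.mul_left _)
      omega
    have hc := Multiset.card_le_card hle
    rw [← hsplit.natDegree_eq_card_roots, hRdeg] at hc
    have hc2 := hc.trans (card_roots' _)
    have b1 : (X * f + h).natDegree ≤ m := by
      refine natDegree_add_le_of_degree_le ?_ hh
      exact natDegree_mul_le.trans (by rw [natDegree_X]; omega)
    have b2 : (derivative f * h - f * derivative h).natDegree ≤ e + m - 1 := by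
      have c1 := natDegree_derivative_le f
      have c2 := natDegree_derivative_le h
      refine (natDegree_sub_le _ _).trans (max_le ?_ ?_)
      · rcases Nat.eq_zero_or_pos e with h0 | h0
        · have : derivative f = 0 := by
            rw [hmon.natDegree_eq_zero.mp (hf.trans h0)]; simp
          simp [this]
        exact natDegree_mul_le.trans (by omega)
      · exact natDegree_mul_le.trans (by omega)
    have b3 := natDegree_mul_le (p := X * f + h) (q := derivative f * h - f * derivative h)
    omega

/-- If many slopes `y ∈ D` have the property that every line of slope `y` meets the affine point
set `U`, then each further slope either has this property too or is the slope of a line contained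
in `U`. -/
theorem exists_line_of_blocked_directions [Fintype F] {p e : ℕ}
    (hp : p.Prime) (hcard : Fintype.card F = p) (U : Finset (F × F)) (hU : U.card = p + e)
    (D : Finset F) (hk : p + 2 * e ≤ 2 * D.card) (hkp : D.card < p)
    (hD : ∀ y ∈ D, ∀ x, ∃ a, (a, a * y + x) ∈ U) (y : F) :
    (∀ x, ∃ a, (a, a * y + x) ∈ U) ∨ ∃ c, ∀ a, (a, a * y + c) ∈ U := by
  classical
  have : Fact p.Prime := ⟨hp⟩
  have : CharP F p := charP_of_card_eq_prime hcard
  have hp2 := hp.two_le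
  set R : F → F[X] := fun y => ∏ P ∈ U, (X + C (P.1 * y - P.2)) with hRdef
  have hmonic : ∀ y, (R y).Monic := fun y => monic_prod_of_monic _ _ fun _ _ => monic_X_add_C _
  have hdeg : ∀ y, (R y).natDegree = p + e := by
    intro y
    rw [hRdef, natDegree_prod_of_monic _ _ fun _ _ => monic_X_add_C _]
    simp only [natDegree_X_add_C, Finset.sum_const, hU, smul_eq_mul, mul_one]
  have hsplit : ∀ y, (R y).Splits := fun y => Splits.prod fun _ _ => Splits.X_add_C _
  have hroot : ∀ y x, (R y).eval x = 0 ↔ ∃ a, (a, a * y + x) ∈ U := by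
    intro y x
    simp only [hRdef, eval_prod, Finset.prod_eq_zero_iff, eval_add, eval_X, eval_C]
    constructor
    · rintro ⟨⟨a, b⟩, hab, h⟩
      refine ⟨a, ?_⟩
      have : b = a * y + x := by linear_combination -h
      rwa [← this]
    · rintro ⟨a, ha⟩
      exact ⟨_, ha, by ring⟩
  have hcoeffD : ∀ y ∈ D, ∀ n, e + 1 < n → n < p → (R y).coeff n = 0 := by
    intro y hy n hn hnp
    have hdvd : X ^ p - X ∣ R y := by
      have hXs : (X ^ p - X : F[X]).Splits := by
        rw [splits_iff_card_roots, ← hcard, FiniteField.roots_X_pow_card_sub_X,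
          FiniteField.X_pow_card_sub_X_natDegree_eq F Fintype.one_lt_card]
        rfl
      rw [hXs.dvd_iff_roots_le_roots (FiniteField.X_pow_card_sub_X_ne_zero F hp.one_lt)
        (hmonic y).ne_zero, ← hcard, FiniteField.roots_X_pow_card_sub_X,
        Multiset.le_iff_subset Finset.univ.nodup]
      intro x _
      rw [mem_roots (hmonic y).ne_zero, IsRoot, hroot]
      exact hD y hy x
    obtain ⟨f, hf⟩ := hdvd
    have hfdeg : f.natDegree = e := by
      have h1 := hdeg y
      have hf0 : f ≠ 0 := by
        rintro rfl
        exact (hmonic y).ne_zero (by simpa using hf)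
      rw [hf, natDegree_mul (FiniteField.X_pow_card_sub_X_ne_zero F hp.one_lt) hf0,
        FiniteField.X_pow_card_sub_X_natDegree_eq F hp.one_lt] at h1
      omega
    rw [hf, sub_mul, coeff_sub, coeff_X_pow_mul', if_neg (by omega)]
    obtain ⟨n, rfl⟩ : ∃ k, n = k + 1 := ⟨n - 1, by omega⟩
    rw [coeff_X_mul, coeff_eq_zero_of_natDegree_lt (by omega), sub_zero]
  have hcoeff : ∀ n, p + e - D.card < n → n < p → (R y).coeff n = 0 := by
    intro n hn hnp
    set σ : F[X] := ∑ t ∈ Finset.powersetCard (U.card - n) U, ∏ P ∈ t, (C P.1 * X - C P.2) with hσ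
    have hσeval : ∀ z, σ.eval z = (R z).coeff n := by
      intro z
      rw [hRdef, Finset.prod_X_add_C_coeff _ _ (by omega), hσ, eval_finsetSum]
      simp [eval_prod]
    have hσdeg : σ.natDegree ≤ U.card - n := by
      refine natDegree_sum_le_of_forall_le _ _ fun t ht => ?_
      refine (natDegree_prod_le _ _).trans ?_
      rw [← (Finset.mem_powersetCard.mp ht).2, Finset.card_eq_sum_ones]
      refine Finset.sum_le_sum fun P _ => ?_
      compute_degree
    have hσ0 : σ = 0 := by
      refine eq_zero_of_natDegree_lt_card_of_eval_eq_zero' σ D (fun z hz => ?_) (by omega)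
      rw [hσeval]
      exact hcoeffD z hz n (by omega) hnp
    rw [← hσeval, hσ0, eval_zero]
  have hXmon : (X ^ p : F[X]).Monic := monic_X_pow p
  have hdecomp : R y = X ^ p * (R y /ₘ X ^ p) + R y %ₘ X ^ p := by
    rw [add_comm]
    exact (modByMonic_add_div (R y) (X ^ p)).symm
  have hqdeg : (R y /ₘ X ^ p).natDegree = e := by
    rw [natDegree_divByMonic _ hXmon, hdeg, natDegree_X_pow]
    omega
  have hrdegp : (R y %ₘ X ^ p).natDegree < p := by
    have := natDegree_modByMonic_lt (R y) hXmon (by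
      intro h
      have := congrArg natDegree h
      rw [natDegree_X_pow, natDegree_one] at this
      omega)
    rwa [natDegree_X_pow] at this
  have hqmon : (R y /ₘ X ^ p).Monic := by
    have h1 : (R y).coeff (e + p) = 1 := by
      rw [add_comm, ← hdeg y]
      exact (hmonic y).coeff_natDegree
    rw [hdecomp, coeff_add, coeff_X_pow_mul,
      coeff_eq_zero_of_natDegree_lt (p := R y %ₘ X ^ p) (by omega), add_zero] at h1
    rw [Monic, leadingCoeff, hqdeg, h1]
  have hrdeg : (R y %ₘ X ^ p).natDegree ≤ p + e - D.card := by
    rw [natDegree_le_iff_coeff_eq_zero]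
    intro n hn
    rcases lt_or_ge n p with hnp | hnp
    · have h1 := hcoeff n hn hnp
      rwa [hdecomp, coeff_add, coeff_X_pow_mul', if_neg (by omega), zero_add] at h1
    · exact coeff_eq_zero_of_natDegree_lt (by omega)
  rcases (hsplit y).lacunary hp hcard hdecomp (hdeg y) hqmon hqdeg hrdeg (by omega) (by omega)
    with h0 | ⟨c, hc⟩
  · left
    intro x
    rw [← hroot, hdecomp]
    have hx := congrArg (eval x) h0
    have hxp : x ^ p = x := by rw [← hcard, FiniteField.pow_card]
    simpa [hxp] using hx
  · right
    refine ⟨-c, fun a => ?_⟩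
    have hmult : p ≤ (R y).roots.count (-c) := by
      rw [count_roots, le_rootMultiplicity_iff (hmonic y).ne_zero]
      exact ⟨_, by simpa using hc⟩
    have hroots : (R y).roots = U.val.map fun P => -(P.1 * y - P.2) := by
      have : R y = (U.val.map fun P => X - C (-(P.1 * y - P.2))).prod := by
        simp only [hRdef, C_neg, sub_neg_eq_add]
        rfl
      rw [this, ← roots_multiset_prod_X_sub_C (U.val.map fun P => -(P.1 * y - P.2)),
        Multiset.map_map]
      rfl
    rw [hroots, Multiset.count_map] at hmult
    have hfilter : p ≤ (U.filter fun P => -c = -(P.1 * y - P.2)).card := hmult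
    have hinj : Set.InjOn Prod.fst
        ((U.filter fun P => -c = -(P.1 * y - P.2) : Finset (F × F)) : Set (F × F)) := by
      rintro ⟨a₁, b₁⟩ h₁ ⟨a₂, b₂⟩ h₂ (rfl : a₁ = a₂)
      have e₁ := (Finset.mem_filter.mp h₁).2
      have e₂ := (Finset.mem_filter.mp h₂).2
      refine Prod.ext rfl ?_
      change b₁ = b₂
      linear_combination e₂ - e₁
    have himage : ((U.filter fun P => -c = -(P.1 * y - P.2)).image Prod.fst) = Finset.univ := by
      rw [← Finset.card_eq_iff_eq_univ]
      refine le_antisymm (Finset.card_le_univ _) ?_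
      rw [Finset.card_image_of_injOn hinj, hcard]
      exact hfilter
    have ha := Finset.mem_univ a
    rw [← himage, Finset.mem_image] at ha
    obtain ⟨⟨a', b⟩, hab, rfl⟩ := ha
    rw [Finset.mem_filter] at hab
    have : b = a' * y + -c := by linear_combination -hab.2
    exact this ▸ hab.1

/-- The nonzero vector `x` represents a point of `S`. -/
def RepresentsPoint (S : Set (PGPoint F)) (x : Fin 3 → F) : Prop :=
  ∃ h : x ≠ 0, Projectivization.mk F x h ∈ S

theorem RepresentsPoint.smul {S : Set (PGPoint F)} {x : Fin 3 → F}
    (hx : RepresentsPoint S x) {c : F} (hc : c ≠ 0) : RepresentsPoint S (c • x) := by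
  obtain ⟨h, hS⟩ := hx
  refine ⟨smul_ne_zero hc h, ?_⟩
  rwa [(Projectivization.mk_eq_mk_iff' F (c • x) x (smul_ne_zero hc h) h).mpr ⟨c, rfl⟩]

theorem mk_mem_pointsOn {L : Submodule F (Fin 3 → F)} {x : Fin 3 → F}
    (h : x ≠ 0) : Projectivization.mk F x h ∈ pointsOn L ↔ x ∈ L := by
  change (Projectivization.mk F x h).submodule ≤ L ↔ _
  rw [Projectivization.submodule_mk, Submodule.span_singleton_le_iff_mem]

theorem NoTangents.exists_representsPoint_add_smul {S : Set (PGPoint F)}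
    (hS : NoTangents S) {v w : Fin 3 → F} (hli : LinearIndependent F ![v, w])
    (hv : RepresentsPoint S v) : ∃ c : F, RepresentsPoint S (w + c • v) := by
  obtain ⟨hv0, hvS⟩ := hv
  have hline : IsProjLine F (Submodule.span F (Set.range ![v, w])) := by
    rw [IsProjLine, finrank_span_eq_card hli, Fintype.card_fin]
  by_contra! hcon
  refine hS _ hline ⟨Projectivization.mk F v hv0, ⟨hvS, ?_⟩, ?_⟩
  · rw [mk_mem_pointsOn]
    exact Submodule.subset_span ⟨0, rfl⟩
  · intro P
    induction P using Projectivization.ind with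
    | h x hx =>
      rintro ⟨hxS, hxL⟩
      rw [mk_mem_pointsOn, Matrix.range_cons_cons_empty, Submodule.mem_span_pair] at hxL
      obtain ⟨a, b, rfl⟩ := hxL
      rw [Projectivization.mk_eq_mk_iff']
      by_cases hb : b = 0
      · exact ⟨a, by simp [hb]⟩
      · refine absurd ((RepresentsPoint.smul ⟨hx, hxS⟩ (inv_ne_zero hb))) ?_
        have : b⁻¹ • (a • v + b • w) = w + (b⁻¹ * a) • v := by
          rw [smul_add, smul_smul, smul_smul, inv_mul_cancel₀ hb, one_smul, add_comm]
        rw [this]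
        exact hcon _

/-- The vectors `w`, `v` span the plane `L`, and `u` completes them to a basis of `F^3`. -/
structure IsFrame (L : Submodule F (Fin 3 → F)) (u w v : Fin 3 → F) :
    Prop where
  indep : ∀ a b c : F, a • u + b • w + c • v = 0 → a = 0 ∧ b = 0 ∧ c = 0
  exists_eq : ∀ x, ∃ a b c : F, x = a • u + b • w + c • v
  mem_iff : ∀ a b c : F, a • u + b • w + c • v ∈ L ↔ a = 0

theorem IsProjLine.exists_isFrame {L : Submodule F (Fin 3 → F)}
    (hL : IsProjLine F L) {v : Fin 3 → F} (hv : v ∈ L) (hv0 : v ≠ 0) :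
    ∃ u w, IsFrame L u w v := by
  rw [IsProjLine] at hL
  obtain ⟨w, hw, hwv⟩ : ∃ w ∈ L, w ∉ Submodule.span F {v} := by
    by_contra! hcon
    have h1 := Submodule.finrank_mono (R := F) (s := L) (t := Submodule.span F {v}) hcon
    rw [hL, finrank_span_singleton hv0] at h1
    omega
  obtain ⟨u, hu⟩ : ∃ u, u ∉ L := by
    by_contra! hcon
    rw [(Submodule.eq_top_iff'.mpr hcon), finrank_top, Module.finrank_fin_fun] at hL
    omega
  have hmem : ∀ a b c : F, a • u + b • w + c • v ∈ L ↔ a = 0 := by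
    intro a b c
    rw [add_assoc, Submodule.add_mem_iff_left _ (L.add_mem (L.smul_mem b hw) (L.smul_mem c hv))]
    constructor
    · intro h
      by_contra ha
      exact hu ((L.smul_mem_iff ha).mp h)
    · rintro rfl
      simp
  have hindep : ∀ a b c : F, a • u + b • w + c • v = 0 → a = 0 ∧ b = 0 ∧ c = 0 := by
    intro a b c h
    have ha : a = 0 := (hmem a b c).mp (h ▸ L.zero_mem)
    subst ha
    have hb : b = 0 := by
      by_contra hb
      apply hwv
      rw [← (Submodule.span F {v}).smul_mem_iff hb, Submodule.mem_span_singleton]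
      refine ⟨-c, ?_⟩
      rw [neg_smul, neg_eq_iff_add_eq_zero, add_comm]
      simpa using h
    subst hb
    simpa [hv0] using h
  refine ⟨u, w, hindep, fun x => ?_, hmem⟩
  have hli : LinearIndependent F ![u, w, v] := by
    rw [Fintype.linearIndependent_iff]
    intro g hg
    rw [Fin.sum_univ_three] at hg
    obtain ⟨h0, h1, h2⟩ := hindep (g 0) (g 1) (g 2) hg
    intro i
    fin_cases i
    exacts [h0, h1, h2]
  have htop := hli.span_eq_top_of_card_eq_finrank (by simp)
  have hx : x ∈ Submodule.span F (Set.range ![u, w, v]) := htop ▸ Submodule.mem_top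
  rw [Submodule.mem_span_range_iff_exists_fun] at hx
  obtain ⟨g, hg⟩ := hx
  rw [Fin.sum_univ_three] at hg
  exact ⟨g 0, g 1, g 2, hg.symm⟩

namespace IsFrame

variable {L : Submodule F (Fin 3 → F)} {u w v : Fin 3 → F}

theorem add_smul_add_smul_ne_zero (hf : IsFrame L u w v) (a b : F) : u + a • w + b • v ≠ 0 := by
  intro h
  have := (hf.indep 1 a b (by rwa [one_smul])).1
  exact one_ne_zero this

theorem add_smul_ne_zero (hf : IsFrame L u w v) (b : F) : w + b • v ≠ 0 := by
  intro h
  have := (hf.indep 0 1 b (by rwa [zero_smul, zero_add, one_smul])).2.1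
  exact one_ne_zero this

theorem translate (hf : IsFrame L u w v) (b : F) : IsFrame L u (w + b • v) v := by
  have key : ∀ x y z : F, x • u + y • (w + b • v) + z • v = x • u + y • w + (y * b + z) • v := by
    intro x y z
    module
  refine ⟨fun x y z h => ?_, fun x => ?_, fun x y z => ?_⟩
  · rw [key] at h
    obtain ⟨rfl, rfl, h⟩ := hf.indep _ _ _ h
    exact ⟨rfl, rfl, by simpa using h⟩
  · obtain ⟨x, y, z, rfl⟩ := hf.exists_eq x
    exact ⟨x, y, z - y * b, by rw [key]; congr 2; ring⟩
  · rw [key, hf.mem_iff]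

theorem swap (hf : IsFrame L u w v) : IsFrame L u v w := by
  have key : ∀ x y z : F, x • u + y • v + z • w = x • u + z • w + y • v := by
    intro x y z
    module
  refine ⟨fun x y z h => ?_, fun x => ?_, fun x y z => ?_⟩
  · rw [key] at h
    obtain ⟨h1, h2, h3⟩ := hf.indep _ _ _ h
    exact ⟨h1, h3, h2⟩
  · obtain ⟨x, y, z, rfl⟩ := hf.exists_eq x
    exact ⟨x, z, y, (key _ _ _).symm⟩
  · rw [key, hf.mem_iff]

theorem mk_affine_injective (hf : IsFrame L u w v) {a b a' b' : F}
    (h : Projectivization.mk F _ (hf.add_smul_add_smul_ne_zero a b) =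
      Projectivization.mk F _ (hf.add_smul_add_smul_ne_zero a' b')) : a = a' ∧ b = b' := by
  rw [Projectivization.mk_eq_mk_iff'] at h
  obtain ⟨c, hc⟩ := h
  obtain ⟨h1, h2, h3⟩ := hf.indep (c - 1) (c * a' - a) (c * b' - b) (by
    rw [← sub_eq_zero] at hc
    rw [← hc]
    module)
  obtain rfl : c = 1 := sub_eq_zero.mp h1
  exact ⟨by linear_combination -h2, by linear_combination -h3⟩

theorem mk_direction_injective (hf : IsFrame L u w v) {b b' : F}
    (h : Projectivization.mk F _ (hf.add_smul_ne_zero b) =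
      Projectivization.mk F _ (hf.add_smul_ne_zero b')) : b = b' := by
  rw [Projectivization.mk_eq_mk_iff'] at h
  obtain ⟨c, hc⟩ := h
  obtain ⟨-, h2, h3⟩ := hf.indep 0 (c - 1) (c * b' - b) (by
    rw [← sub_eq_zero] at hc
    rw [← hc]
    module)
  obtain rfl : c = 1 := sub_eq_zero.mp h2
  linear_combination -h3

theorem direction_mem (hf : IsFrame L u w v) (b : F) : w + b • v ∈ L := by
  have := (hf.mem_iff 0 1 b).mpr rfl
  rwa [zero_smul, zero_add, one_smul] at this

theorem affine_notMem (hf : IsFrame L u w v) (a b : F) : u + a • w + b • v ∉ L := by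
  have := (hf.mem_iff 1 a b).not.mpr one_ne_zero
  rwa [one_smul] at this

theorem ncard_inter_pointsOn (hf : IsFrame L u w v) {S : Set (PGPoint F)}
    (hv : ¬ RepresentsPoint S v) :
    {y : F | RepresentsPoint S (w + y • v)}.ncard = (S ∩ pointsOn L).ncard := by
  refine Set.ncard_congr (fun y _ => Projectivization.mk F _ (hf.add_smul_ne_zero y)) ?_ ?_ ?_
  · rintro y ⟨_, hy⟩
    exact ⟨hy, (mk_mem_pointsOn _).mpr (hf.direction_mem y)⟩
  · intro y y' _ _ h
    exact hf.mk_direction_injective h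
  · intro P
    induction P using Projectivization.ind with
    | h x hx =>
      rintro ⟨hxS, hxL⟩
      rw [mk_mem_pointsOn] at hxL
      obtain ⟨a, b, c, rfl⟩ := hf.exists_eq x
      obtain rfl := (hf.mem_iff a b c).mp hxL
      have hb : b ≠ 0 := by
        rintro rfl
        have hc : c ≠ 0 := by rintro rfl; simp at hx
        apply hv
        have := RepresentsPoint.smul ⟨hx, hxS⟩ (inv_ne_zero hc)
        simpa [smul_smul, hc] using this
      have e : b⁻¹ • ((0 : F) • u + b • w + c • v) = w + (b⁻¹ * c) • v := by
        simp [smul_smul, hb]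
      have hrep := RepresentsPoint.smul ⟨hx, hxS⟩ (inv_ne_zero hb)
      rw [e] at hrep
      refine ⟨b⁻¹ * c, hrep, ?_⟩
      rw [Projectivization.mk_eq_mk_iff']
      exact ⟨b⁻¹, e⟩

theorem ncard_sdiff_pointsOn (hf : IsFrame L u w v) (S : Set (PGPoint F)) :
    {P : F × F | RepresentsPoint S (u + P.1 • w + P.2 • v)}.ncard = (S \ pointsOn L).ncard := by
  refine Set.ncard_congr
    (fun P _ => Projectivization.mk F _ (hf.add_smul_add_smul_ne_zero P.1 P.2)) ?_ ?_ ?_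
  · rintro P ⟨_, hP⟩
    exact ⟨hP, (mk_mem_pointsOn _).not.mpr (hf.affine_notMem _ _)⟩
  · intro P P' _ _ h
    exact Prod.ext_iff.mpr (hf.mk_affine_injective h)
  · intro P
    induction P using Projectivization.ind with
    | h x hx =>
      rintro ⟨hxS, hxL⟩
      rw [mk_mem_pointsOn] at hxL
      obtain ⟨a, b, c, rfl⟩ := hf.exists_eq x
      have ha := (hf.mem_iff a b c).not.mp hxL
      have e : a⁻¹ • (a • u + b • w + c • v) = u + (a⁻¹ * b) • w + (a⁻¹ * c) • v := by
        simp [smul_smul, ha]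
      have hrep := RepresentsPoint.smul ⟨hx, hxS⟩ (inv_ne_zero ha)
      rw [e] at hrep
      refine ⟨(a⁻¹ * b, a⁻¹ * c), hrep, ?_⟩
      rw [Projectivization.mk_eq_mk_iff']
      exact ⟨a⁻¹, e⟩

theorem exists_not_representsPoint [Fintype F] (hf : IsFrame L u w v) {S : Set (PGPoint F)}
    (hcard : (S ∩ pointsOn L).ncard < Fintype.card F) :
    ∃ y : F, ¬ RepresentsPoint S (w + y • v) := by
  by_contra! hcon
  have hle : (Set.univ : Set F).ncard ≤ (S ∩ pointsOn L).ncard :=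
    Set.ncard_le_ncard_of_injOn (fun y => Projectivization.mk F _ (hf.add_smul_ne_zero y))
      (fun y _ => ⟨(hcon y).2, (mk_mem_pointsOn _).mpr (hf.direction_mem y)⟩)
      (fun y _ y' _ h => hf.mk_direction_injective h)
  rw [Set.ncard_univ, Nat.card_eq_fintype_card] at hle
  omega

end IsFrame

theorem NoTangents.card_le_ncard_sdiff [Fintype F] {S : Set (PGPoint F)}
    (hS : NoTangents S) {L : Submodule F (Fin 3 → F)} (hL : IsProjLine F L)
    (hne : (S ∩ pointsOn L).Nonempty) :
    Fintype.card F ≤ (S \ pointsOn L).ncard := by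
  obtain ⟨P, hPS, hPL⟩ := hne
  induction P using Projectivization.ind with
  | h v hv =>
    rw [mk_mem_pointsOn] at hPL
    obtain ⟨u, w, hf⟩ := hL.exists_isFrame hPL hv
    have hex : ∀ a : F, ∃ c : F, RepresentsPoint S (u + a • w + c • v) := by
      intro a
      refine hS.exists_representsPoint_add_smul ?_ ⟨hv, hPS⟩
      rw [LinearIndependent.pair_iff]
      intro x y hxy
      obtain ⟨hy, -, hx⟩ := hf.indep y (y * a) x (by rw [← hxy]; module)
      exact ⟨hx, hy⟩
    choose c hc using hex
    rw [← hf.ncard_sdiff_pointsOn, ← Nat.card_eq_fintype_card, ← Set.ncard_univ]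
    exact Set.ncard_le_ncard_of_injOn (fun a => (a, c a)) (fun a _ => hc a)
      (fun a _ a' _ h => congrArg Prod.fst h)

theorem NoTangents.ncard_inter_add_card_le [Fintype F]
    {S : Set (PGPoint F)} (hS : NoTangents S) {L : Submodule F (Fin 3 → F)}
    (hL : IsProjLine F L) (hne : (S ∩ pointsOn L).Nonempty) :
    (S ∩ pointsOn L).ncard + Fintype.card F ≤ S.ncard := by
  rw [← Set.ncard_inter_add_ncard_sdiff_eq_ncard S (pointsOn L)]
  exact Nat.add_le_add_left (hS.card_le_ncard_sdiff hL hne) _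

theorem NoTangents.card_le_ncard [Fintype F] {S : Set (PGPoint F)}
    (hS : NoTangents S) (hne : S.Nonempty) : Fintype.card F ≤ S.ncard := by
  obtain ⟨P, hP⟩ := hne
  obtain ⟨L, hL, hPL⟩ : ∃ L, IsProjLine F L ∧ P ∈ pointsOn L := by
    induction P using Projectivization.ind with
    | h v hv =>
      obtain ⟨w, hw⟩ : ∃ w, w ∉ Submodule.span F {v} := by
        by_contra! hcon
        have h1 := finrank_span_singleton (K := F) hv
        rw [Submodule.eq_top_iff'.mpr hcon, finrank_top, Module.finrank_fin_fun] at h1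
        omega
      have hli : LinearIndependent F ![v, w] := by
        rw [LinearIndependent.pair_iff' hv]
        intro a ha
        exact hw (Submodule.mem_span_singleton.mpr ⟨a, ha⟩)
      refine ⟨Submodule.span F (Set.range ![v, w]), ?_, ?_⟩
      · rw [IsProjLine, finrank_span_eq_card hli, Fintype.card_fin]
      · rw [mk_mem_pointsOn]
        exact Submodule.subset_span ⟨0, rfl⟩
  have := hS.ncard_inter_add_card_le hL ⟨P, hP, hPL⟩
  omega

/-- a non-empty set without tangents `S` in `PG(2,p)` with
`|S| < 2p` meets every line in at most `|S|/2 - (p-5)/4` points, i.e.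
`4·|L ∩ S| ≤ 2|S| - p + 5` for every line `L`. -/
theorem stmt_8 [Fintype F] (p : ℕ) (hp : p.Prime) (hcard : Fintype.card F = p)
    (S : Set (PGPoint F)) (hne : S.Nonempty) (hS : NoTangents S)
    (hsize : S.ncard < 2 * p)
    (L : Submodule F (Fin 3 → F)) (hL : IsProjLine F L) :
    4 * (S ∩ pointsOn L).ncard + p ≤ 2 * S.ncard + 5 := by
  classical
  by_contra! hcon
  rcases Set.eq_empty_or_nonempty (S ∩ pointsOn L) with hempty | hneL
  · have := hS.card_le_ncard hne
    rw [hempty, Set.ncard_empty] at hcon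
    omega
  have hsum := Set.ncard_inter_add_ncard_sdiff_eq_ncard S (pointsOn L)
  have hdiff := hS.card_le_ncard_sdiff hL hneL
  have hkp : (S ∩ pointsOn L).ncard < Fintype.card F := by omega
  obtain ⟨u, w, v, hf, hv, hw⟩ : ∃ u w v, IsFrame L u w v ∧ ¬ RepresentsPoint S v ∧
      ¬ RepresentsPoint S w := by
    obtain ⟨x, hx, hx0⟩ : ∃ x ∈ L, x ≠ 0 := by
      apply L.exists_mem_ne_zero_of_ne_bot
      rintro rfl
      rw [IsProjLine, finrank_bot] at hL
      omega
    obtain ⟨u, w, hf⟩ := hL.exists_isFrame hx hx0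
    obtain ⟨y, hy⟩ := hf.exists_not_representsPoint hkp
    have hf' := (hf.translate y).swap
    obtain ⟨z, hz⟩ := hf'.exists_not_representsPoint hkp
    exact ⟨u, _, _, hf'.translate z, hy, hz⟩
  set D : Finset F := {y | RepresentsPoint S (w + y • v)} with hDdef
  set U : Finset (F × F) := {P | RepresentsPoint S (u + P.1 • w + P.2 • v)} with hUdef
  have hDcard : D.card = (S ∩ pointsOn L).ncard := by
    rw [← hf.ncard_inter_pointsOn hv, Set.ncard_eq_toFinset_card']
    congr 1
    ext
    simp [hDdef]
  have hUcard : U.card = (S \ pointsOn L).ncard := by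
    rw [← hf.ncard_sdiff_pointsOn, Set.ncard_eq_toFinset_card']
    congr 1
    ext
    simp [hUdef]
  have hblocked : ∀ y ∈ D, ∀ x, ∃ a, (a, a * y + x) ∈ U := by
    intro y hy x
    obtain ⟨c, hc⟩ := hS.exists_representsPoint_add_smul (v := w + y • v) (w := u + x • v) (by
      rw [LinearIndependent.pair_iff]
      intro s t hst
      obtain ⟨ht, hs, -⟩ := hf.indep t s (s * y + t * x) (by rw [← hst]; module)
      exact ⟨hs, ht⟩) (Finset.mem_filter.mp hy).2
    refine ⟨c, Finset.mem_filter.mpr ⟨Finset.mem_univ _, ?_⟩⟩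
    convert hc using 1
    module
  have hsecond : ∀ a x, (a, x) ∈ U → ∃ a', a' ≠ a ∧ (a', x) ∈ U := by
    intro a x hax
    obtain ⟨c, hc⟩ := hS.exists_representsPoint_add_smul (v := u + a • w + x • v) (w := w) (by
      rw [LinearIndependent.pair_iff]
      intro s t hst
      obtain ⟨rfl, ht, -⟩ := hf.indep s (s * a + t) (s * x) (by rw [← hst]; module)
      exact ⟨rfl, by simpa using ht⟩) (Finset.mem_filter.mp hax).2
    have hc0 : c ≠ 0 := by
      rintro rfl
      rw [zero_smul, add_zero] at hc
      exact hw hc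
    refine ⟨a + c⁻¹, by simpa using hc0, Finset.mem_filter.mpr ⟨Finset.mem_univ _, ?_⟩⟩
    convert hc.smul (inv_ne_zero hc0) using 1
    rw [smul_add, smul_smul, inv_mul_cancel₀ hc0]
    module
  rcases exists_line_of_blocked_directions (e := U.card - p) hp hcard U (by omega) D (by omega)
    (by omega) hblocked 0 with hall | ⟨c, hc⟩
  · have hle : (Finset.univ : Finset F).card * 2 ≤ U.card := by
      rw [mul_comm]
      refine Finset.mul_card_image_le_card_of_maps_to (f := Prod.snd)
        (fun _ _ => Finset.mem_univ _) 2 fun x _ => ?_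
      obtain ⟨a, ha⟩ := hall x
      rw [mul_zero, zero_add] at ha
      obtain ⟨a', hne', ha'⟩ := hsecond a x ha
      refine Finset.one_lt_card.mpr ⟨(a, x), by simp [ha], (a', x), by simp [ha'], ?_⟩
      exact fun h => hne' (congrArg Prod.fst h).symm
    rw [Finset.card_univ] at hle
    omega
  · have hwL : IsProjLine F (Submodule.span F (Set.range ![u + c • v, w])) := by
      rw [IsProjLine, finrank_span_eq_card, Fintype.card_fin]
      rw [LinearIndependent.pair_iff]
      intro s t hst
      obtain ⟨hs, ht, -⟩ := hf.indep s t (s * c) (by rw [← hst]; module)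
      exact ⟨hs, ht⟩
    set M := Submodule.span F (Set.range ![u + c • v, w]) with hM
    have hmem : ∀ a : F, Projectivization.mk F _ (hf.add_smul_add_smul_ne_zero a c) ∈
        S ∩ pointsOn M := by
      intro a
      have hac : (a, c) ∈ U := by simpa using hc a
      refine ⟨(Finset.mem_filter.mp hac).2.2, ?_⟩
      rw [mk_mem_pointsOn, hM, Matrix.range_cons_cons_empty, Submodule.mem_span_pair]
      exact ⟨1, a, by module⟩
    have hle : (Set.univ : Set F).ncard ≤ (S ∩ pointsOn M).ncard :=
      Set.ncard_le_ncard_of_injOn _ (fun a _ => hmem a)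
        (fun a _ a' _ h => (hf.mk_affine_injective h).1)
    rw [Set.ncard_univ, Nat.card_eq_fintype_card] at hle
    have := hS.ncard_inter_add_card_le hwL ⟨_, hmem 0⟩
    omega
end

section
/- Let q be an odd prime power and let r be an integer with 0 ≤ r ≤ (q−5)/2. Then there exists a set without tangents S in PG(2,q) of size q(q−1)/2 − r(q+1)/2. (Explicitly: if C is an irreducible conic, Q an exterior point of C, and R a set of r external lines of C through Q, then the set of interior points of C not lying on any line of R is such a set.) -/
/-!
`PG(2,F)`: points are the 1-dimensional subspaces of `F^3` (modelled as the
projectivization of `Fin 3 → F`), lines are the 2-dimensional subspaces.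
-/

variable {F : Type*} [Field F]

theorem sum_quadraticChar_sq_sub [Fintype F] [DecidableEq F] (hF : ringChar F ≠ 2) {m : F}
    (hm : m ≠ 0) : ∑ s : F, quadraticChar F (s ^ 2 - m) = -1 := by
  have h2 : (2 : F) ≠ 0 := Ring.two_ne_zero hF
  have hfib (s : F) : ((Finset.univ.filter fun t : F => t ^ 2 = s ^ 2 - m).card : ℤ)
      = quadraticChar F (s ^ 2 - m) + 1 := by
    rw [← quadraticChar_card_sqrts hF]
    congr 2
    ext t
    simp
  have hpairs : (Finset.univ.filter fun p : F × F => p.2 ^ 2 = p.1 ^ 2 - m).card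
      = (Finset.univ.erase (0 : F)).card := by
    refine Finset.card_nbij' (fun p => p.1 - p.2)
      (fun a => ((a + m / a) / 2, (m / a - a) / 2)) ?_ ?_ ?_ ?_
    · rintro ⟨s, t⟩ h
      simp only [Finset.coe_filter, Finset.mem_univ, true_and, Set.mem_ofPred_eq] at h
      simp only [Finset.coe_erase, Finset.coe_univ, Set.mem_sdiff, Set.mem_univ, true_and,
        Set.mem_singleton_iff]
      intro h0
      exact hm (by linear_combination (s + t) * h0 + h)
    · intro a ha
      have ha : a ≠ 0 := by simpa using ha
      simp only [Finset.coe_filter, Finset.mem_univ, true_and, Set.mem_ofPred_eq]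
      field_simp
      ring
    · rintro ⟨s, t⟩ h
      simp only [Finset.coe_filter, Finset.mem_univ, true_and, Set.mem_ofPred_eq] at h
      have h0 : s - t ≠ 0 := fun h0 => hm (by linear_combination (s + t) * h0 + h)
      have hdiv : m / (s - t) = s + t := by
        rw [div_eq_iff h0]
        linear_combination h
      simp only [hdiv, Prod.mk.injEq]
      constructor <;> field_simp <;> ring
    · intro a ha
      have ha : a ≠ 0 := by simpa using ha
      field_simp
      ring
  have hsum : (Finset.univ.filter fun p : F × F => p.2 ^ 2 = p.1 ^ 2 - m).card
      = ∑ s : F, (Finset.univ.filter fun t : F => t ^ 2 = s ^ 2 - m).card := by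
    simp only [Finset.card_filter, Fintype.sum_prod_type]
  have hcard : ((Finset.univ.erase (0 : F)).card : ℤ) = Fintype.card F - 1 := by
    rw [Finset.cast_card_erase_of_mem (Finset.mem_univ _), Finset.card_univ]
  rw [← hpairs, hsum, Nat.cast_sum, Finset.sum_congr rfl fun s _ => hfib s,
    Finset.sum_add_distrib] at hcard
  simp only [Finset.sum_const, Finset.card_univ, nsmul_eq_mul, mul_one] at hcard
  linarith

theorem two_mul_ite_quadraticChar_eq_neg_one [Fintype F] [DecidableEq F] (a : F) :
    2 * (if quadraticChar F a = -1 then (1 : ℤ) else 0)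
      = 1 - quadraticChar F a - if a = 0 then 1 else 0 := by
  by_cases ha : a = 0
  · simp [ha]
  · rcases quadraticChar_dichotomy ha with h | h <;> simp [h, ha]

theorem two_mul_card_quadraticChar_eq_neg_one [Fintype F] [DecidableEq F]
    (hF : ringChar F ≠ 2) :
    2 * ((Finset.univ.filter fun a : F => quadraticChar F a = -1).card : ℤ)
      = Fintype.card F - 1 := by
  rw [Finset.card_filter, Nat.cast_sum, Finset.mul_sum]
  push_cast
  simp only [two_mul_ite_quadraticChar_eq_neg_one, Finset.sum_sub_distrib,
    quadraticChar_sum_zero hF]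
  simp

theorem two_mul_card_quadraticChar_sq_sub_eq_neg_one [Fintype F] [DecidableEq F]
    (hF : ringChar F ≠ 2) {m : F} (hm : m ≠ 0) :
    2 * ((Finset.univ.filter fun s : F => quadraticChar F (s ^ 2 - m) = -1).card : ℤ)
      = Fintype.card F - quadraticChar F m := by
  have hroots : ((Finset.univ.filter fun s : F => s ^ 2 - m = 0).card : ℤ)
      = quadraticChar F m + 1 := by
    rw [← quadraticChar_card_sqrts hF]
    congr 2
    ext t
    simp [sub_eq_zero]
  rw [Finset.card_filter] at hroots ⊢
  push_cast at hroots ⊢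
  rw [Finset.mul_sum]
  simp only [two_mul_ite_quadraticChar_eq_neg_one, Finset.sum_sub_distrib,
    sum_quadraticChar_sq_sub hF hm]
  rw [hroots]
  simp

theorem card_filter_add_mul [Fintype F] (P : F → Prop) [DecidablePred P] (c : F) {d : F}
    (hd : d ≠ 0) :
    (Finset.univ.filter fun t => P (c + t * d)).card = (Finset.univ.filter P).card := by
  refine Finset.card_nbij' (fun t => c + t * d) (fun s => (s - c) / d) ?_ ?_ ?_ ?_
  · intro t ht
    simpa using ht
  · intro s hs
    simpa [div_mul_cancel₀ _ hd] using hs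
  · intro t _
    simp [hd]
  · intro s _
    simp [div_mul_cancel₀ _ hd]

/-- An affine line through an interior point of the parabola `z = y ^ 2` contains at least
`(q - 1) / 2` interior points. -/
theorem card_sub_one_le_card_interior_on_line [Fintype F] [DecidableEq F] (hF : ringChar F ≠ 2)
    {y z u v : F} (huv : u ≠ 0 ∨ v ≠ 0) (hyz : quadraticChar F (y ^ 2 - z) = -1) :
    (Fintype.card F : ℤ) - 1 ≤ 2 * ((Finset.univ.filter fun t : F =>
      quadraticChar F ((y + t * u) ^ 2 - (z + t * v)) = -1).card : ℤ) := by
  have h2 : (2 : F) ≠ 0 := Ring.two_ne_zero hF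
  by_cases hu : u = 0
  · have hv : -v ≠ 0 := neg_ne_zero.mpr (huv.resolve_left (not_not.mpr hu))
    have hcard := card_filter_add_mul (fun a : F => quadraticChar F a = -1) (y ^ 2 - z) hv
    have hform (t : F) : (y + t * u) ^ 2 - (z + t * v) = y ^ 2 - z + t * -v := by
      rw [hu]; ring
    simp only [hform, hcard]
    exact (two_mul_card_quadraticChar_eq_neg_one hF).ge
  · let c := y - v / (2 * u)
    let m := c ^ 2 - y ^ 2 + z
    have hform (t : F) : (y + t * u) ^ 2 - (z + t * v) = (c + t * u) ^ 2 - m := by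
      simp only [m, c]
      field_simp
      ring
    have hm : m ≠ 0 := by
      intro hm
      have hc : y ^ 2 - z = c ^ 2 := by linear_combination -hm
      rw [hc, quadraticChar_neg_one_iff_not_isSquare] at hyz
      exact hyz (IsSquare.sq c)
    have hcard := card_filter_add_mul (fun a : F => quadraticChar F (a ^ 2 - m) = -1) c hu
    simp only [hform, hcard, two_mul_card_quadraticChar_sq_sub_eq_neg_one hF hm]
    rcases quadraticChar_dichotomy hm with h | h <;> linarith

theorem exists_ne_zero_interior_on_line [Fintype F] [DecidableEq F] (hF : ringChar F ≠ 2)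
    {M : Finset F} (hM : 2 * M.card + 5 ≤ Fintype.card F) {y z u v : F} (huv : u ≠ 0 ∨ v ≠ 0)
    (hyz : quadraticChar F (y ^ 2 - z) = -1) (hz : z ∉ M) :
    ∃ t : F, t ≠ 0 ∧ quadraticChar F ((y + t * u) ^ 2 - (z + t * v)) = -1 ∧ z + t * v ∉ M := by
  have hA := card_sub_one_le_card_interior_on_line hF huv hyz
  set A := Finset.univ.filter fun t : F =>
    quadraticChar F ((y + t * u) ^ 2 - (z + t * v)) = -1
  have hB : (Finset.univ.filter fun t : F => z + t * v ∈ M).card ≤ M.card := by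
    by_cases hv : v = 0
    · simp [hv, hz]
    · rw [card_filter_add_mul (fun a => a ∈ M) z hv]
      simp
  set B := Finset.univ.filter fun t : F => z + t * v ∈ M
  have hAB := Finset.le_card_sdiff B A
  obtain ⟨t, ht, ht0⟩ := Finset.exists_mem_ne (s := A \ B) (by omega) 0
  exact ⟨t, ht0, by simpa [A, B] using ht⟩

/-- The point `(1 : y : z)` of the projective plane. -/
def affinePoint (p : F × F) : PGPoint F :=
  Projectivization.mk F ![1, p.1, p.2] fun h => one_ne_zero (congrFun h 0)

theorem affinePoint_injective : Function.Injective (affinePoint (F := F)) := by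
  rintro ⟨y, z⟩ ⟨y', z'⟩ h
  obtain ⟨a, ha⟩ := (Projectivization.mk_eq_mk_iff' F _ _ _ _).mp h
  have h0 := congrFun ha 0
  have h1 := congrFun ha 1
  have h2 := congrFun ha 2
  simp at h0 h1 h2
  subst h0
  simp_all

theorem affinePoint_mem_pointsOn {L : Submodule F (Fin 3 → F)} {p : F × F} :
    affinePoint p ∈ pointsOn L ↔ ![1, p.1, p.2] ∈ L := by
  simp [pointsOn, affinePoint, Projectivization.submodule_mk, Submodule.span_singleton_le_iff_mem]

theorem exists_direction_of_isProjLine {L : Submodule F (Fin 3 → F)} (hL : IsProjLine F L)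
    {y z : F} (hp : ![1, y, z] ∈ L) :
    ∃ u v : F, (u ≠ 0 ∨ v ≠ 0) ∧ ∀ t : F, ![1, y + t * u, z + t * v] ∈ L := by
  have hnot : ¬ L ≤ Submodule.span F {![1, y, z]} := by
    intro hle
    have h := (Submodule.finrank_mono hle).trans (finrank_span_le_card _)
    rw [hL] at h
    simp at h
  obtain ⟨w, hw, hwp⟩ := SetLike.not_le_iff_exists.mp hnot
  refine ⟨w 1 - w 0 * y, w 2 - w 0 * z, ?_, fun t => ?_⟩
  · by_contra! h
    refine hwp (Submodule.mem_span_singleton.mpr ⟨w 0, ?_⟩)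
    ext i
    fin_cases i
    · simp
    · simpa using (sub_eq_zero.mp h.1).symm
    · simpa using (sub_eq_zero.mp h.2).symm
  · have hmem := L.add_mem hp (L.smul_mem t (L.sub_mem hw (L.smul_mem (w 0) hp)))
    convert hmem using 1
    ext i
    fin_cases i <;> simp [Matrix.vecHead, Matrix.vecTail]

/-- Interior points of the parabola `z = y ^ 2` off the lines `z = m` with `m ∈ M`. -/
def interiorOff [Fintype F] [DecidableEq F] (M : Finset F) : Finset (F × F) :=
  Finset.univ.filter fun p => quadraticChar F (p.1 ^ 2 - p.2) = -1 ∧ p.2 ∉ M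

theorem noTangents_affinePoint_image_interiorOff [Fintype F] [DecidableEq F]
    (hF : ringChar F ≠ 2) {M : Finset F} (hM : 2 * M.card + 5 ≤ Fintype.card F) :
    NoTangents (affinePoint '' (interiorOff M : Set (F × F))) := by
  rintro L hL ⟨_, ⟨⟨⟨y, z⟩, hp, rfl⟩, hpL⟩, huniq⟩
  obtain ⟨hyz, hz⟩ : quadraticChar F (y ^ 2 - z) = -1 ∧ z ∉ M := by
    simpa [interiorOff] using hp
  obtain ⟨u, v, huv, hline⟩ :=
    exists_direction_of_isProjLine hL (affinePoint_mem_pointsOn.mp hpL)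
  obtain ⟨t, ht, hint, hnM⟩ := exists_ne_zero_interior_on_line hF hM huv hyz hz
  have heq := affinePoint_injective <| huniq (affinePoint (y + t * u, z + t * v))
    ⟨⟨_, by simpa [interiorOff] using ⟨hint, hnM⟩, rfl⟩,
      affinePoint_mem_pointsOn.mpr (hline t)⟩
  simp only [Prod.mk.injEq, add_eq_left, mul_eq_zero, ht, false_or] at heq
  exact huv.elim (· heq.1) (· heq.2)

theorem two_mul_card_interiorOff [Fintype F] [DecidableEq F] (hF : ringChar F ≠ 2)
    {M : Finset F} (hM : ∀ m ∈ M, quadraticChar F m = -1) :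
    2 * ((interiorOff M).card : ℤ)
      = Fintype.card F * (Fintype.card F - 1) - M.card * (Fintype.card F + 1) := by
  have hsplit := Finset.card_filter_add_card_filter_not
    (s := Finset.univ.filter fun p : F × F => quadraticChar F (p.1 ^ 2 - p.2) = -1)
    (fun p => p.2 ∈ M)
  rw [Finset.filter_filter, Finset.filter_filter] at hsplit
  have hall : 2 * ((Finset.univ.filter fun p : F × F =>
      quadraticChar F (p.1 ^ 2 - p.2) = -1).card : ℤ)
      = Fintype.card F * (Fintype.card F - 1) := by
    have hrow (y : F) : (Finset.univ.filter fun z : F => quadraticChar F (y ^ 2 - z) = -1).card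
        = (Finset.univ.filter fun a : F => quadraticChar F a = -1).card := by
      rw [← card_filter_add_mul _ (y ^ 2) (neg_ne_zero.mpr (one_ne_zero (α := F)))]
      simp [sub_eq_add_neg]
    simp only [Finset.card_filter, Fintype.sum_prod_type] at hrow ⊢
    simp only [hrow, ← Finset.card_filter, Finset.sum_const, Finset.card_univ, smul_eq_mul]
    rw [← two_mul_card_quadraticChar_eq_neg_one hF]
    push_cast
    ring
  have hon : 2 * ((Finset.univ.filter fun p : F × F =>
      quadraticChar F (p.1 ^ 2 - p.2) = -1 ∧ p.2 ∈ M).card : ℤ)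
      = M.card * (Fintype.card F + 1) := by
    have hcol : ∀ m ∈ M,
        2 * ((Finset.univ.filter fun y : F => quadraticChar F (y ^ 2 - m) = -1).card : ℤ)
          = Fintype.card F + 1 := by
      intro m hm
      have hm0 : m ≠ 0 := by
        rintro rfl
        simpa using hM 0 hm
      rw [two_mul_card_quadraticChar_sq_sub_eq_neg_one hF hm0, hM m hm, sub_neg_eq_add]
    have hcols : (Finset.univ.filter fun p : F × F =>
        quadraticChar F (p.1 ^ 2 - p.2) = -1 ∧ p.2 ∈ M).card
        = ∑ m ∈ M, (Finset.univ.filter fun y : F => quadraticChar F (y ^ 2 - m) = -1).card := by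
      simp only [Finset.card_filter, Fintype.sum_prod_type_right, and_comm (b := _ ∈ M), ite_and]
      rw [← Finset.sum_subset (Finset.subset_univ M)]
      · exact Finset.sum_congr rfl fun m hm => by simp [hm]
      · intro m _ hm
        simp [hm]
    rw [hcols, Nat.cast_sum, Finset.mul_sum, Finset.sum_congr rfl hcol]
    simp
  rw [← hall, ← hon, ← hsplit]
  simp only [interiorOff]
  push_cast
  ring

/-- for odd `q` and `0 ≤ r ≤ (q-5)/2`, there exists a set without
tangents in `PG(2,q)` of size `q(q-1)/2 - r(q+1)/2`. -/
theorem stmt_10 [Fintype F] (q r : ℕ) (hq : Fintype.card F = q) (hodd : Odd q)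
    (hr : 2 * r + 5 ≤ q) :
    ∃ S : Set (PGPoint F), NoTangents S ∧
      S.ncard = q * (q - 1) / 2 - r * (q + 1) / 2 := by
  classical
  have hF : ringChar F ≠ 2 := by
    intro h
    have := FiniteField.even_card_of_char_two h
    have := Nat.odd_iff.mp hodd
    omega
  have hnonsq := two_mul_card_quadraticChar_eq_neg_one hF
  obtain ⟨M, hMsub, hMcard⟩ := Finset.exists_subset_card_eq
    (s := Finset.univ.filter fun a : F => quadraticChar F a = -1) (n := r) (by omega)
  refine ⟨_, noTangents_affinePoint_image_interiorOff hF (M := M) (by omega), ?_⟩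
  rw [Set.ncard_image_of_injective _ affinePoint_injective, Set.ncard_coe_finset]
  have hcard := two_mul_card_interiorOff hF (M := M) fun m hm => by simpa using hMsub hm
  rw [hMcard, hq] at hcard
  obtain ⟨k, rfl⟩ := hodd
  have h1 : (2 * k + 1) * (2 * k + 1 - 1) / 2 = (2 * k + 1) * k := by
    rw [Nat.add_sub_cancel, mul_left_comm, Nat.mul_div_cancel_left _ two_pos]
  have h2 : r * (2 * k + 1 + 1) / 2 = r * (k + 1) := by
    rw [show r * (2 * k + 1 + 1) = 2 * (r * (k + 1)) by ring,
      Nat.mul_div_cancel_left _ two_pos]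
  rw [h1, h2]
  apply Nat.eq_sub_of_add_eq
  zify
  push_cast at hcard
  linarith
end
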